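/- Each P_{2i,j} (1 ≤ i ≤ n²/2, j ∈ {0,1}) is an indecomposable projective left u-module of k-dimension 2n², the modules P_{2i,j} and P_{2i',j'} are isomorphic only if (i,j) = (i',j'), and every finite-dimensional indecomposable projective left u-module is isomorphic to some P_{2i,j}; in particular u has exactly n² isomorphism classes of indecomposable projective modules, all of dimension 2n². -/

import Mathlib

noncomputable section

open scoped TensorProduct

namespace QFL

/-- The defining relations of the quasi-Frobenius-Lusztig kernel `ũ_q(sl₂)`,
on the free algebra on four generators `K = ι 0`, `K̂ = ι 1`, `E = ι 2`, `F = ι 3`. -/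
inductive Rel (k : Type) [Field k] (n : ℕ) (q : k) :
    FreeAlgebra k (Fin 4) → FreeAlgebra k (Fin 4) → Prop
  | Kord : Rel k n q (FreeAlgebra.ι k (0 : Fin 4) ^ n) 1
  | Khord : Rel k n q (FreeAlgebra.ι k (1 : Fin 4) ^ n)
      ((FreeAlgebra.ι k (0 : Fin 4) ^ (n - 1)) ^ 2)
  | KKh : Rel k n q (FreeAlgebra.ι k (0 : Fin 4) * FreeAlgebra.ι k (1 : Fin 4))
      (FreeAlgebra.ι k (1 : Fin 4) * FreeAlgebra.ι k (0 : Fin 4))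
  | KE : Rel k n q
      (FreeAlgebra.ι k (0 : Fin 4) * FreeAlgebra.ι k (2 : Fin 4) *
        FreeAlgebra.ι k (0 : Fin 4) ^ (n - 1))
      (q ^ n • FreeAlgebra.ι k (2 : Fin 4))
  | KF : Rel k n q
      (FreeAlgebra.ι k (0 : Fin 4) * FreeAlgebra.ι k (3 : Fin 4) *
        FreeAlgebra.ι k (0 : Fin 4) ^ (n - 1))
      ((q ^ n)⁻¹ • FreeAlgebra.ι k (3 : Fin 4))
  | KhE : Rel k n q
      (FreeAlgebra.ι k (1 : Fin 4) * FreeAlgebra.ι k (2 : Fin 4) *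
        FreeAlgebra.ι k (1 : Fin 4) ^ (n ^ 2 - 1))
      ((q ^ n * (q ^ 2)⁻¹) • FreeAlgebra.ι k (2 : Fin 4))
  | KhF : Rel k n q
      (FreeAlgebra.ι k (1 : Fin 4) * FreeAlgebra.ι k (3 : Fin 4) *
        FreeAlgebra.ι k (1 : Fin 4) ^ (n ^ 2 - 1))
      (((q ^ n)⁻¹ * q ^ 2) • FreeAlgebra.ι k (3 : Fin 4))
  | Enil : Rel k n q (FreeAlgebra.ι k (2 : Fin 4) ^ n ^ 2) 0
  | Fnil : Rel k n q (FreeAlgebra.ι k (3 : Fin 4) ^ n ^ 2) 0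
  | EF : Rel k n q
      (FreeAlgebra.ι k (3 : Fin 4) * FreeAlgebra.ι k (2 : Fin 4) -
        q⁻¹ • (FreeAlgebra.ι k (2 : Fin 4) * FreeAlgebra.ι k (3 : Fin 4)))
      (1 - FreeAlgebra.ι k (0 : Fin 4) ^ (n - 1) * FreeAlgebra.ι k (1 : Fin 4))

/-- The algebra `ũ_q(sl₂)` as the quotient of the free algebra by the defining relations. -/
abbrev U (k : Type) [Field k] (n : ℕ) (q : k) := RingQuot (Rel k n q)

variable (k : Type) [Field k] (n : ℕ) (q : k)

def K : U k n q := RingQuot.mkAlgHom k (Rel k n q) (FreeAlgebra.ι k (0 : Fin 4))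
def Kh : U k n q := RingQuot.mkAlgHom k (Rel k n q) (FreeAlgebra.ι k (1 : Fin 4))
def E : U k n q := RingQuot.mkAlgHom k (Rel k n q) (FreeAlgebra.ι k (2 : Fin 4))
def F : U k n q := RingQuot.mkAlgHom k (Rel k n q) (FreeAlgebra.ι k (3 : Fin 4))

/-- `K⁻¹ = K^(n-1)`. -/
def Kinv : U k n q := K k n q ^ (n - 1)
/-- `K̂⁻¹ = K̂^(n²-1)`. -/
def Khinv : U k n q := Kh k n q ^ (n ^ 2 - 1)

/-- `φ_{2i} = (2/n²) Σ_{t<n²/2} q^{-2it} (K⁻¹K̂)^t`. -/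
def phi (i : ℕ) : U k n q :=
  ((n ^ 2 : k)⁻¹ * 2) • ∑ t ∈ Finset.range (n ^ 2 / 2),
    (q⁻¹ ^ (2 * i * t)) • (Kinv k n q * Kh k n q) ^ t

/-- `𝟙₀ = (1/2)(1 + KK̂^(n/2))` and `𝟙₁ = (1/2)(1 - KK̂^(n/2))`. -/
def oneJ (j : ℕ) : U k n q :=
  if j = 0 then (2 : k)⁻¹ • (1 + K k n q * Kh k n q ^ (n / 2))
  else (2 : k)⁻¹ • (1 - K k n q * Kh k n q ^ (n / 2))

/-- The idempotent `e_{2i,j} = φ_{2i} 𝟙_j`. -/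
def eIdem (i j : ℕ) : U k n q := phi k n q i * oneJ k n q j

/-- `α_{2i,j} = F^(n²-1) e_{2i,j}`. -/
def alpha (i j : ℕ) : U k n q := F k n q ^ (n ^ 2 - 1) * eIdem k n q i j

/-- `β_{2i,j} = E^(2i-2) α_{2i,j}`. -/
def beta (i j : ℕ) : U k n q := E k n q ^ (2 * i - 2) * alpha k n q i j

/-- The Gaussian number `s_q = 1 + q + ⋯ + q^(s-1)`. -/
def gauss (x : k) (s : ℕ) : k := ∑ t ∈ Finset.range s, x ^ t

/-- The span of the PBW-type monomials `F^a K^c K̂^d E^b` with `a ≤ n²-2`, `b ≤ n²-1`,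
`c ≤ n-1`, `d ≤ n²-1`. -/
def pbw : Submodule k (U k n q) :=
  Submodule.span k {x | ∃ a b c d : ℕ, a ≤ n ^ 2 - 2 ∧ b ≤ n ^ 2 - 1 ∧ c ≤ n - 1 ∧
    d ≤ n ^ 2 - 1 ∧ x = F k n q ^ a * K k n q ^ c * Kh k n q ^ d * E k n q ^ b}

/-- `γ_{2i,j}`: the unique element of the PBW span with `F·γ = β_{2i,j}`. -/
def gam (i j : ℕ) : U k n q :=
  @dite _ (∃! x, x ∈ pbw k n q ∧ F k n q * x = beta k n q i j)
    (Classical.propDecidable _) (fun h => h.choose) (fun _ => 0)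

/-- The left ideal `P_{2i,j} = u·γ_{2i,j}`. -/
def P (i j : ℕ) : Submodule (U k n q) (U k n q) :=
  Submodule.span (U k n q) {gam k n q i j}

/-- `S_{2i,j} = Soc(P_{2i,j})`, the sum of all simple submodules of `P_{2i,j}`. -/
def S (i j : ℕ) : Submodule (U k n q) (U k n q) :=
  sSup {N : Submodule (U k n q) (U k n q) | N ≤ P k n q i j ∧ IsSimpleModule (U k n q) N}

end QFL

namespace QFL

/-- A module is indecomposable if it is nonzero and admits no decomposition into two
nonzero complementary submodules. -/
def IsIndecomposable (R M : Type*) [Ring R] [AddCommGroup M] [Module R M] : Prop :=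
  Nontrivial M ∧ ∀ N₁ N₂ : Submodule R M, IsCompl N₁ N₂ → N₁ = ⊥ ∨ N₂ = ⊥

end QFL

/-!
Put `L = K⁻¹K̂`, so that `FE - q⁻¹EF = 1 - L`. The module `P_{2i,j}` consists of the elements
`p(E) α + p'(E) γ`, where `F α = 0` and `F γ = E ^ (2i - 2) α`. Letting such a relation act on
modules induced from characters of the torus shows that `p` and `p'` are unique modulo `X ^ n²`,
whence the dimension `2n²`. If `p'(0) ≠ 0`, then lowering `p(E) α + p'(E) γ` with `F` recovers
`α` and hence `γ`. So the elements with `p'(0) = 0` contain every proper submodule, and `P_{2i,j}`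
has a simple head.

In this head the image of `γ` is a lowest weight vector on which `γ E ^ (n² - 2i)` acts by a nonzero
scalar. Hence right multiplication by `E ^ (n² - 2i) γ` maps `P_{2i,j}` onto itself, and as a
surjective endomorphism of a Noetherian module it is bijective; this makes `P_{2i,j}` a direct
summand of the algebra. The weight of a lowest weight vector of the head determines `(i, j)`. Every
simple module contains a lowest weight vector and so is the head of some `P_{2i,j}`, and an
indecomposable projective module is determined by any of its simple quotients.
-/

namespace QFL

open Polynomial

/-! ### Commutation up to a scalar -/

section QCommute

variable {k A V : Type*} [Field k] [Ring A] [Algebra k A] {c d : k} {x y z : A}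

/-- `x` and `y` commute up to the scalar `c`. -/
def QCommute (c : k) (x y : A) : Prop := x * y = c • (y * x)

namespace QCommute

lemma mul_left (hx : QCommute c x z) (hy : QCommute d y z) : QCommute (c * d) (x * y) z := by
  simp only [QCommute] at *
  rw [mul_assoc, hy, mul_smul_comm, ← mul_assoc, hx, smul_mul_assoc, smul_smul, mul_comm,
    mul_assoc]

lemma mul_right (hy : QCommute c x y) (hz : QCommute d x z) : QCommute (c * d) x (y * z) := by
  simp only [QCommute] at *
  rw [← mul_assoc, hy, smul_mul_assoc, mul_assoc, hz, mul_smul_comm, smul_smul, mul_assoc]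

lemma pow_left (h : QCommute c x y) (s : ℕ) : QCommute (c ^ s) (x ^ s) y := by
  induction s with
  | zero => simp [QCommute]
  | succ s ih => simpa only [pow_succ] using ih.mul_left h

lemma pow_right (h : QCommute c x y) (s : ℕ) : QCommute (c ^ s) x (y ^ s) := by
  induction s with
  | zero => simp [QCommute]
  | succ s ih => simpa only [pow_succ] using ih.mul_right h

lemma symm (h : QCommute c x y) (hc : c ≠ 0) : QCommute c⁻¹ y x := by
  rw [QCommute, h, inv_smul_smul₀ hc]

lemma mul_aeval (h : QCommute c x y) (f : k[X]) :
    x * aeval y f = aeval y (f.comp (C c * X)) * x := by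
  induction f using Polynomial.induction_on' with
  | add f g hf hg => simp only [map_add, add_comp, mul_add, add_mul, hf, hg]
  | monomial s a =>
    rw [monomial_comp, mul_pow, ← C_pow, aeval_monomial, ← mul_assoc, ← Algebra.commutes,
      mul_assoc, h.pow_right s]
    simp only [map_mul, aeval_C, map_pow, aeval_X, Algebra.smul_def, mul_assoc]

variable [AddCommGroup V] [Module k V] [Module A V] [IsScalarTower k A V] {v : V}

lemma smul_smul_eq (h : QCommute c x y) (hv : x • v = d • v) :
    x • y • v = (c * d) • y • v := by
  rw [smul_smul, h, smul_assoc, mul_smul, hv, smul_comm, smul_smul]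
  exact smul_comm _ _ _

end QCommute

variable [AddCommGroup V] [Module k V] [Module A V] [IsScalarTower k A V] {v : V}

lemma pow_smul_eq_of_smul_eq (hv : x • v = c • v) (s : ℕ) : x ^ s • v = c ^ s • v := by
  induction s with
  | zero => simp
  | succ s ih => rw [pow_succ, mul_smul, hv, smul_comm, ih, smul_smul, pow_succ']

end QCommute

/-! ### Polynomials in a nilpotent element -/

section Nilpotent

variable {k A V : Type*} [Field k] [Ring A] [Algebra k A] [AddCommGroup V] [Module A V]
  {N : ℕ} {e x : A} {f g : k[X]} {v w : V} {c a b : k}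

lemma aeval_eq_zero_of_X_pow_dvd (he : e ^ N = 0) (hf : X ^ N ∣ f) : aeval e f = 0 := by
  obtain ⟨g, rfl⟩ := hf
  rw [map_mul, map_pow, aeval_X, he, zero_mul]

lemma exists_aeval_mul_aeval_eq_one (he : IsNilpotent e) (hf : f.coeff 0 ≠ 0) :
    ∃ g : k[X], aeval e g * aeval e f = 1 := by
  obtain ⟨N, he⟩ := he
  have hcop : IsCoprime f (X ^ N) :=
    ((irreducible_X.coprime_iff_not_dvd).2 (X_dvd_iff.not.2 hf)).symm.pow_right
  obtain ⟨g, g', h⟩ := hcop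
  refine ⟨g, ?_⟩
  rw [← map_mul, eq_sub_of_add_eq h, map_sub, map_one,
    aeval_eq_zero_of_X_pow_dvd he (dvd_mul_left _ _), sub_zero]

lemma isUnit_aeval_of_coeff_zero_ne_zero (he : IsNilpotent e) (hf : f.coeff 0 ≠ 0) :
    IsUnit (aeval e f) := by
  obtain ⟨g, hg⟩ := exists_aeval_mul_aeval_eq_one he hf
  exact ⟨⟨aeval e f, aeval e g, by rw [← map_mul, mul_comm, map_mul, hg], hg⟩, rfl⟩

lemma exists_eq_X_pow_natTrailingDegree_mul (hf : f ≠ 0) :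
    ∃ g : k[X], g.coeff 0 ≠ 0 ∧ f = X ^ f.natTrailingDegree * g := by
  obtain ⟨g, hg⟩ := X_pow_dvd_iff.2 fun _ hd ↦ coeff_eq_zero_of_lt_natTrailingDegree (p := f) hd
  have hcoeff := congrArg (coeff · f.natTrailingDegree) hg
  simp only [coeff_X_pow_mul', le_refl, if_true, Nat.sub_self] at hcoeff
  exact ⟨g, hcoeff ▸ trailingCoeff_nonzero_iff_nonzero.2 hf, hg⟩

lemma pow_natTrailingDegree_smul_mem (he : IsNilpotent e) (hf : f ≠ 0) {W : Submodule A V}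
    (h : aeval e f • w ∈ W) : e ^ f.natTrailingDegree • w ∈ W := by
  obtain ⟨g, hg, hfg⟩ := exists_eq_X_pow_natTrailingDegree_mul hf
  obtain ⟨u, hu⟩ := isUnit_aeval_of_coeff_zero_ne_zero he hg
  rw [hfg, mul_comm, map_mul, map_pow, aeval_X, ← hu, mul_smul] at h
  simpa only [smul_smul, Units.inv_mul, one_smul, Units.inv_mul_cancel_left]
    using W.smul_mem (↑u⁻¹ : A) h

lemma X_pow_dvd_of_aeval_smul_eq_zero (he : e ^ N = 0) (hw : e ^ (N - 1) • w ≠ 0)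
    (h : aeval e f • w = 0) : X ^ N ∣ f := by
  obtain rfl | hf := eq_or_ne f 0
  · exact dvd_zero _
  refine X_pow_dvd_iff.2 fun d hd ↦ coeff_eq_zero_of_lt_natTrailingDegree (hd.trans_le ?_)
  by_contra! hlt
  have hz : e ^ f.natTrailingDegree • w = 0 := by
    simpa using pow_natTrailingDegree_smul_mem (W := (⊥ : Submodule A V)) ⟨N, he⟩ hf (by simpa)
  apply hw
  rw [← Nat.sub_add_cancel (Nat.le_sub_one_of_lt hlt), pow_add, mul_smul, hz, smul_zero]

variable [Module k V] [IsScalarTower k A V]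

lemma eigenvalue_eq_of_mem_aeval (he : IsNilpotent e) (hx : QCommute c x e) (hv₀ : v ≠ 0)
    (hv : x • v = a • v) (hw : x • w = b • w) (hvw : w = aeval e f • v)
    (hwv : v = aeval e g • w) : a = b := by
  have hunit {p : k[X]} (hp : aeval e p • v = 0) : p.coeff 0 = 0 := by
    by_contra h0
    exact hv₀ ((isUnit_aeval_of_coeff_zero_ne_zero he h0).smul_eq_zero.1 hp)
  have hfg := hunit (p := g * f - 1) (by
    rw [map_sub, map_mul, map_one, sub_smul, mul_smul, ← hvw, ← hwv, one_smul, sub_self])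
  have hab := hunit (p := a • f.comp (C c * X) - b • f) (by
    rw [map_sub, map_smul, map_smul, sub_smul, smul_assoc, smul_assoc, ← hvw, ← hw, hvw,
      smul_smul, hx.mul_aeval, mul_smul, hv, smul_comm, sub_self])
  have hf₀ : f.coeff 0 ≠ 0 := fun h ↦ by simp [h] at hfg
  have hcomp : (f.comp (C c * X)).coeff 0 = f.coeff 0 := by simp
  rw [coeff_sub, coeff_smul, coeff_smul, hcomp, ← sub_smul] at hab
  exact sub_eq_zero.1 ((smul_eq_zero.1 hab).resolve_right hf₀)

end Nilpotent

section Nilpotent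

variable {A V : Type*} [Ring A] [AddCommGroup V] [Module A V] {N : ℕ} {e f : A}

lemma eq_zero_of_sum_pow_smul_eq_zero (hf : f ^ N = 0) {y : ℕ → V}
    (hsum : ∑ a ∈ Finset.range N, f ^ a • y a = 0)
    (hy : ∀ a < N, f ^ (N - 1) • y a = 0 → y a = 0) {a : ℕ} (ha : a < N) : y a = 0 := by
  induction a using Nat.strong_induction_on with
  | h a ih =>
    refine hy a ha ?_
    have h := congrArg (f ^ (N - 1 - a) • ·) hsum
    simp only [Finset.smul_sum, smul_smul, ← pow_add, smul_zero] at h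
    rwa [Finset.sum_eq_single_of_mem a (Finset.mem_range.2 ha), Nat.sub_add_cancel (by omega)] at h
    intro b hb hba
    obtain hlt | hgt := hba.lt_or_gt
    · rw [ih b hlt (Finset.mem_range.1 hb), smul_zero]
    · rw [pow_eq_zero_of_le (by omega) hf, zero_smul]

lemma eq_zero_of_sum_mul_pow_eq_zero (he : e ^ N = 0) {z : ℕ → A}
    (hsum : ∑ b ∈ Finset.range N, z b * e ^ b = 0)
    (hz : ∀ b < N, z b * e ^ (N - 1) = 0 → z b = 0) {b : ℕ} (hb : b < N) : z b = 0 :=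
  eq_zero_of_sum_pow_smul_eq_zero (f := MulOpposite.op e)
    (by rw [← MulOpposite.op_pow, he, MulOpposite.op_zero])
    (by simpa only [← MulOpposite.op_pow, op_smul_eq_mul] using hsum)
    (by simpa only [← MulOpposite.op_pow, op_smul_eq_mul] using hz) hb

end Nilpotent

/-! ### Eigenprojections of an element of finite order -/

section EigenProj

variable {k A V : Type*} [Field k] [Ring A] [Algebra k A] [AddCommGroup V] [Module k V]
  [Module A V] [IsScalarTower k A V] {ζ : k} {M : ℕ} {g : A} {v : V} {i : ℕ}

/-- The projection onto the `ζ ^ i`-eigenspace of an element `g` with `g ^ M = 1`, for `ζ` a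
primitive `M`-th root of unity. -/
def eigenProj (ζ : k) (M : ℕ) (g : A) (i : ℕ) : A :=
  (M : k)⁻¹ • ∑ t ∈ Finset.range M, ζ⁻¹ ^ (i * t) • g ^ t

lemma eigenProj_mem (S : Subalgebra k A) (hg : g ∈ S) : eigenProj ζ M g i ∈ S :=
  S.smul_mem (S.sum_mem fun t _ ↦ S.smul_mem (S.pow_mem hg t) _) _

lemma eigenProj_neg_one_zero : eigenProj (-1 : k) 2 g 0 = (2 : k)⁻¹ • (1 + g) := by
  simp [eigenProj, Finset.sum_range_succ]

lemma eigenProj_neg_one_one : eigenProj (-1 : k) 2 g 1 = (2 : k)⁻¹ • (1 - g) := by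
  simp [eigenProj, Finset.sum_range_succ, sub_eq_add_neg]

lemma eigenProj_smul_of_smul_eq (hM : (M : k) ≠ 0) (hζ : ζ ≠ 0) (hv : g • v = ζ ^ i • v) :
    eigenProj ζ M g i • v = v := by
  have hterm (t : ℕ) : (ζ⁻¹ ^ (i * t) • g ^ t) • v = v := by
    rw [smul_assoc, pow_smul_eq_of_smul_eq hv, smul_smul, ← pow_mul, inv_pow,
      inv_mul_cancel₀ (pow_ne_zero _ hζ), one_smul]
  simp only [eigenProj, smul_assoc, Finset.sum_smul, hterm, Finset.sum_const, Finset.card_range]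
  rw [← Nat.cast_smul_eq_nsmul k, inv_smul_smul₀ hM]

lemma mul_eigenProj (hζ : ζ ≠ 0) (hζM : ζ ^ M = 1) (hg : g ^ M = 1) (i : ℕ) :
    g * eigenProj ζ M g i = ζ ^ i • eigenProj ζ M g i := by
  have hshift (t : ℕ) : g * (ζ⁻¹ ^ (i * t) • g ^ t)
      = ζ ^ i • (ζ⁻¹ ^ (i * (t + 1)) • g ^ (t + 1)) := by
    rw [mul_smul_comm, ← pow_succ', smul_smul, mul_add_one, pow_add ζ⁻¹, mul_left_comm, ← mul_pow,
      mul_inv_cancel₀ hζ, one_pow, mul_one]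
  have hend : ζ⁻¹ ^ (i * M) • g ^ M = ζ⁻¹ ^ (i * 0) • g ^ 0 := by
    rw [mul_comm, pow_mul, inv_pow, hζM, hg]
    simp
  rw [eigenProj, mul_smul_comm, smul_comm (ζ ^ i), Finset.mul_sum]
  congr 1
  simp only [hshift, ← Finset.smul_sum]
  congr 1
  have h := (Finset.sum_range_succ' (fun t ↦ ζ⁻¹ ^ (i * t) • g ^ t) M).symm.trans
    (Finset.sum_range_succ _ M)
  simpa only [hend, add_left_inj] using h

lemma sum_eigenProj (hζ : IsPrimitiveRoot ζ M) (hM : (M : k) ≠ 0) (g : A) :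
    ∑ i ∈ Finset.range M, eigenProj ζ M g i = 1 := by
  have hgeom (t : ℕ) (ht : t ∈ Finset.range M) (ht₀ : t ≠ 0) :
      ∑ i ∈ Finset.range M, ζ⁻¹ ^ (i * t) • g ^ t = 0 := by
    have hne : ζ⁻¹ ^ t ≠ 1 := hζ.inv.pow_ne_one_of_pos_of_lt ht₀ (Finset.mem_range.1 ht)
    simp only [← Finset.sum_smul, mul_comm _ t, pow_mul]
    rw [geom_sum_eq hne, ← pow_mul, mul_comm, pow_mul, hζ.inv.pow_eq_one, one_pow, sub_self,
      zero_div, zero_smul]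
  have hM₀ : 0 ∈ Finset.range M :=
    Finset.mem_range.2 (Nat.pos_of_ne_zero fun h ↦ hM (by rw [h, Nat.cast_zero]))
  simp only [eigenProj, ← Finset.smul_sum]
  rw [Finset.sum_comm, Finset.sum_eq_single_of_mem 0 hM₀ hgeom]
  simp [← Nat.cast_smul_eq_nsmul k, hM]

end EigenProj

/-! ### The relation `FE - q⁻¹EF = 1 - L` -/

section Gauss

variable {k : Type} [Field k] {q μ : k} {N s : ℕ}

/-- The coefficient in `F E ^ (s + 1) v = lowerCoeff q μ s • E ^ s v` for `v` with `F v = 0` and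
`L v = μ v`. -/
def lowerCoeff (q μ : k) (s : ℕ) : k := gauss k q (s + 1) * q⁻¹ ^ s * (1 - q⁻¹ ^ s * μ)

lemma lowerCoeff_zero : lowerCoeff q μ 0 = 1 - μ := by
  simp [lowerCoeff, gauss]

lemma lowerCoeff_succ (hq : q ≠ 0) :
    lowerCoeff q μ (s + 1) = q⁻¹ * lowerCoeff q μ s + (1 - q⁻¹ ^ (2 * (s + 1)) * μ) := by
  have hinv : q⁻¹ * q = 1 := inv_mul_cancel₀ hq
  have hpow : q⁻¹ ^ (s + 1) * q ^ (s + 1) = 1 := by rw [← mul_pow, hinv, one_pow]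
  have hlast : gauss k q (s + 1 + 1) = q ^ (s + 1) + gauss k q (s + 1) := geom_sum_succ'
  have hfirst : gauss k q (s + 1 + 1) = q * gauss k q (s + 1) + 1 := geom_sum_succ
  rw [lowerCoeff, lowerCoeff]
  linear_combination q⁻¹ ^ (s + 1) * hlast - q⁻¹ ^ (2 * s + 2) * μ * hfirst + hpow
    - q⁻¹ ^ (2 * s + 1) * μ * gauss k q (s + 1) * hinv

lemma lowerCoeff_pow_self (hq : q ≠ 0) (s : ℕ) : lowerCoeff q (q ^ s) s = 0 := by
  rw [lowerCoeff, ← mul_pow, inv_mul_cancel₀ hq, one_pow, sub_self, mul_zero]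

lemma gauss_eq_zero (hq : IsPrimitiveRoot q N) (hN : 1 < N) : gauss k q N = 0 :=
  hq.geom_sum_eq_zero hN

lemma lowerCoeff_ne_zero (hq : IsPrimitiveRoot q N) (hs : s + 1 < N) (hμ : μ ≠ q ^ s) :
    lowerCoeff q μ s ≠ 0 := by
  have hq₀ : q ≠ 0 := hq.ne_zero (by omega)
  have hgauss : gauss k q (s + 1) ≠ 0 := fun h ↦
    hq.pow_ne_one_of_pos_of_lt s.succ_ne_zero hs <| sub_eq_zero.1 <| by
      rw [← geom_sum_mul, ← gauss, h, zero_mul]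
  refine mul_ne_zero (mul_ne_zero hgauss (pow_ne_zero _ (inv_ne_zero hq₀))) (sub_ne_zero.2 ?_)
  rintro h
  rw [inv_pow, eq_inv_mul_iff_mul_eq₀ (pow_ne_zero _ hq₀), mul_one] at h
  exact hμ h.symm

end Gauss

section Triple

variable {k : Type} {A V : Type*} [Field k] [Ring A] [Algebra k A] {q μ : k} {l e f : A}

/-- Elements `l`, `e`, `f` of an algebra satisfying the relations of `L = K⁻¹K̂`, `E`, `F`. -/
structure QTriple (q : k) (l e f : A) : Prop where
  ne_zero : q ≠ 0
  f_mul_e : f * e = q⁻¹ • (e * f) + (1 - l)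
  l_e : QCommute (q ^ 2)⁻¹ l e
  l_f : QCommute (q ^ 2) l f

namespace QTriple

lemma pow_succ_mul (h : QTriple q l e f) (s : ℕ) :
    f ^ (s + 1) * e = q⁻¹ ^ (s + 1) • (e * f ^ (s + 1)) +
      f ^ s * (gauss k q⁻¹ (s + 1) • 1 - gauss k q (s + 1) • l) := by
  induction s with
  | zero => simp [h.f_mul_e, gauss]
  | succ s ih =>
    have hgauss (x : k) : gauss k x (s + 1 + 1) = x * gauss k x (s + 1) + 1 := geom_sum_succ
    have hmul : f ^ s * (gauss k q⁻¹ (s + 1) • 1 - gauss k q (s + 1) • l) * f =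
        gauss k q⁻¹ (s + 1) • f ^ (s + 1) - (gauss k q (s + 1) * q ^ 2) • (f ^ (s + 1) * l) := by
      rw [mul_assoc, sub_mul, smul_mul_assoc, smul_mul_assoc, h.l_f, one_mul, mul_sub,
        mul_smul_comm, mul_smul_comm, mul_smul_comm, smul_smul, ← mul_assoc, ← pow_succ]
    rw [pow_succ f (s + 1), mul_assoc, h.f_mul_e, mul_add, mul_smul_comm, ← mul_assoc, ih,
      add_mul, hmul, smul_mul_assoc, mul_assoc, ← pow_succ, hgauss, hgauss]
    have hscalar (c : k) : q⁻¹ * (c * q ^ 2) = q * c := by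
      rw [pow_two, mul_left_comm, inv_mul_cancel_left₀ h.ne_zero, mul_comm]
    simp only [smul_add, smul_sub, smul_smul, hscalar, mul_sub, mul_one, mul_smul_comm]
    module

variable [AddCommGroup V] [Module k V] [Module A V] [IsScalarTower k A V] {v : V}

lemma f_smul_pow_succ_smul (h : QTriple q l e f) (hv : l • v = μ • v) (s : ℕ) :
    f • e ^ (s + 1) • v = q⁻¹ ^ (s + 1) • e ^ (s + 1) • f • v + lowerCoeff q μ s • e ^ s • v := by
  have hfe (w : V) : f • e • w = q⁻¹ • e • f • w + (w - l • w) := by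
    rw [smul_smul, h.f_mul_e, add_smul, smul_assoc, sub_smul, one_smul, mul_smul]
  induction s with
  | zero => simp [hfe, hv, lowerCoeff_zero, sub_smul]
  | succ s ih =>
    have hl : l • e ^ (s + 1) • v = (q⁻¹ ^ (2 * (s + 1)) * μ) • e ^ (s + 1) • v := by
      rw [(h.l_e.pow_right (s + 1)).smul_smul_eq hv, pow_mul, inv_pow, inv_pow, inv_pow]
    have hpow (t : ℕ) (w : V) : e • e ^ t • w = e ^ (t + 1) • w := by rw [smul_smul, pow_succ']
    rw [← hpow, hfe, ih, hl, lowerCoeff_succ h.ne_zero]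
    simp only [smul_add, smul_comm e (_ : k), hpow]
    generalize e ^ (s + 1 + 1) • f • v = x, e ^ (s + 1) • v = y
    module

lemma exists_f_smul_aeval_smul (h : QTriple q l e f) (hv : l • v = μ • v) (p : k[X]) :
    ∃ g : k[X], (∀ s, g.coeff s = lowerCoeff q μ s * p.coeff (s + 1)) ∧
      f • aeval e p • v = aeval e (p.comp (C q⁻¹ * X)) • f • v + aeval e g • v := by
  induction p using Polynomial.induction_on' with
  | add p₁ p₂ h₁ h₂ =>
    obtain ⟨g₁, hg₁, hp₁⟩ := h₁
    obtain ⟨g₂, hg₂, hp₂⟩ := h₂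
    refine ⟨g₁ + g₂, fun s ↦ by rw [coeff_add, coeff_add, mul_add, hg₁, hg₂], ?_⟩
    simp only [map_add, add_comp, add_smul, smul_add, hp₁, hp₂]
    abel
  | monomial s a =>
    obtain - | s := s
    · exact ⟨0, fun s ↦ by simp, by simp [smul_comm f]⟩
    · refine ⟨monomial s (lowerCoeff q μ s * a), fun t ↦ ?_, ?_⟩
      · obtain rfl | hst := eq_or_ne s t
        · simp only [coeff_monomial_same]
        · rw [coeff_monomial_of_ne _ hst.symm, coeff_monomial_of_ne _ (by omega), mul_zero]
      · have hmon (t : ℕ) (b : k) (w : V) : aeval e (monomial t b) • w = b • e ^ t • w := by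
          rw [aeval_monomial, mul_smul, algebraMap_smul]
        rw [monomial_comp, mul_pow, ← C_pow, ← mul_assoc, ← C_mul, C_mul_X_pow_eq_monomial,
          hmon, hmon, hmon, smul_comm f, h.f_smul_pow_succ_smul hv, smul_add, smul_smul a,
          smul_smul a, mul_comm a (lowerCoeff q μ s)]

/-- The recursion for the coefficients `d` makes the sum telescope. -/
lemma f_smul_sum_e_pow_smul_f_pow_smul (h : QTriple q l e f) {μ : ℕ → k}
    (hv : ∀ r, l • f ^ r • v = μ r • f ^ r • v) {d : ℕ → k} {a R : ℕ}
    (hd : ∀ r < R, q⁻¹ ^ r * d r + d (r + 1) * lowerCoeff q (μ (a + r + 1)) r = 0) :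
    f • ∑ r ∈ Finset.range (R + 1), d r • e ^ r • f ^ (a + r) • v =
      (q⁻¹ ^ R * d R) • e ^ R • f ^ (a + R + 1) • v := by
  have hpow (r : ℕ) : f • f ^ r • v = f ^ (r + 1) • v := by rw [smul_smul, pow_succ']
  induction R with
  | zero => simp [smul_comm f, hpow]
  | succ R ih =>
    rw [Finset.sum_range_succ, smul_add, ih fun r hr ↦ hd r (Nat.lt_succ_of_lt hr), smul_comm f,
      ← add_assoc, h.f_smul_pow_succ_smul (hv _), smul_add, smul_smul (d _), smul_smul (d _),
      add_left_comm, ← add_smul, hd R R.lt_succ_self, zero_smul, add_zero, hpow, mul_comm]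

lemma f_pow_smul_e_pow_smul (h : QTriple q l e f) (hv : l • v = μ • v) (hfv : f • v = 0) (s : ℕ) :
    f ^ s • e ^ s • v = (∏ t ∈ Finset.range s, lowerCoeff q μ t) • v := by
  induction s with
  | zero => simp
  | succ s ih =>
    rw [pow_succ f, mul_smul, h.f_smul_pow_succ_smul hv, hfv, smul_zero, smul_zero, zero_add,
      smul_comm, ih, smul_smul, Finset.prod_range_succ, mul_comm]

lemma mem_of_e_pow_smul_mem (h : QTriple q l e f) (hv : l • v = μ • v) (hfv : f • v = 0) {m : ℕ}
    (hμ : ∀ t < m, lowerCoeff q μ t ≠ 0) {W : Submodule A V} (hW : e ^ m • v ∈ W) : v ∈ W := by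
  have hfW := W.smul_mem (f ^ m) hW
  rw [h.f_pow_smul_e_pow_smul hv hfv] at hfW
  exact ((W.restrictScalars k).smul_mem_iff (Finset.prod_ne_zero_iff.2 fun t ht ↦
    hμ t (Finset.mem_range.1 ht))).1 hfW

/-- Lowering `p(E) α + γ` gives `E ^ m α` up to other powers of `E`, since the coefficient of
`E ^ m α` in `F p(E) α` vanishes. -/
lemma mem_of_aeval_smul_add_aeval_smul_mem (h : QTriple q l e f) (he : IsNilpotent e) {m : ℕ}
    (hm : ∀ t < m, lowerCoeff q (q ^ m) t ≠ 0) {α γ : V} (hα : l • α = q ^ m • α) (hfα : f • α = 0)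
    (hfγ : f • γ = e ^ m • α) {p r : k[X]} (hr : r.coeff 0 ≠ 0) {W : Submodule A V}
    (hW : aeval e p • α + aeval e r • γ ∈ W) : γ ∈ W := by
  obtain ⟨g, hg⟩ := exists_aeval_mul_aeval_eq_one he hr
  have hmonic : aeval e (g * p) • α + γ ∈ W := by
    simpa only [smul_add, smul_smul, hg, one_smul, map_mul] using W.smul_mem (aeval e g) hW
  obtain ⟨p', hp', hfp⟩ := h.exists_f_smul_aeval_smul hα (g * p)
  have hlower : aeval e (p' + X ^ m) • α ∈ W := by
    have hf := W.smul_mem f hmonic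
    rwa [smul_add, hfp, hfα, smul_zero, zero_add, hfγ, ← aeval_X (R := k) e, ← map_pow, aeval_X,
      ← add_smul, ← map_add] at hf
  have hcoeff : (p' + X ^ m).coeff m = 1 := by
    rw [coeff_add, hp', lowerCoeff_pow_self h.ne_zero, zero_mul, zero_add, coeff_X_pow_self]
  have hαW : e ^ m • α ∈ W := by
    have hne : (p' + X ^ m).coeff m ≠ 0 := hcoeff ▸ one_ne_zero
    rw [← Nat.sub_add_cancel (natTrailingDegree_le_of_ne_zero hne), pow_add, mul_smul]
    exact W.smul_mem _ (pow_natTrailingDegree_smul_mem he (fun h0 ↦ hne (by rw [h0, coeff_zero]))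
      hlower)
  exact (W.add_mem_iff_right (W.smul_mem _ (h.mem_of_e_pow_smul_mem hα hfα hm hαW))).1 hmonic

end QTriple

end Triple

/-! ### Projective covers of simple modules -/

section ProjectiveCover

variable {R M V W S : Type*} [Ring R] [AddCommGroup M] [Module R M] [AddCommGroup V] [Module R V]
  [AddCommGroup W] [Module R W] [AddCommGroup S] [Module R S]

lemma supIrred_top_of_supIrred {p : Submodule R M} (hp : SupIrred p) :
    SupIrred (⊤ : Submodule R p) := by
  have htop {N : Submodule R p} (hN : N.map p.subtype = p) : N = ⊤ :=
    Submodule.map_injective_of_injective p.subtype_injective (by rw [hN, p.map_subtype_top])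
  refine ⟨fun hmin ↦ hp.ne_bot ?_, fun N₁ N₂ h ↦ ?_⟩
  · rw [← p.map_subtype_top, isMin_iff_eq_bot.1 hmin, Submodule.map_bot]
  · exact (hp.2 (by rw [← Submodule.map_sup, h, p.map_subtype_top])).imp htop htop

lemma isIndecomposable_of_supIrred_top (h : SupIrred (⊤ : Submodule R M)) :
    IsIndecomposable R M := by
  refine ⟨(Submodule.nontrivial_iff R).1 (nontrivial_of_ne _ _ h.ne_bot), fun N₁ N₂ hN ↦ ?_⟩
  obtain rfl | rfl := h.2 hN.sup_eq_top
  · exact .inr (top_disjoint.1 hN.disjoint)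
  · exact .inl (disjoint_top.1 hN.disjoint)

lemma projective_of_surjective_comp [Module.Projective R M] [IsNoetherian R V] (i : V →ₗ[R] M)
    (s : M →ₗ[R] V) (h : Function.Surjective (s ∘ₗ i)) : Module.Projective R V := by
  let φ := LinearEquiv.ofBijective (s ∘ₗ i)
    ⟨IsNoetherian.injective_of_surjective_endomorphism _ h, h⟩
  exact .of_split i (φ.symm ∘ₗ s) (LinearMap.ext φ.symm_apply_apply)

lemma surjective_of_surjective_comp_of_supIrred_top [Nontrivial S]
    (hW : SupIrred (⊤ : Submodule R W)) (φ : V →ₗ[R] W) (θ : W →ₗ[R] S)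
    (h : Function.Surjective (θ ∘ₗ φ)) : Function.Surjective φ := by
  have hker : LinearMap.ker θ ≠ ⊤ := by
    rw [Ne, LinearMap.ker_eq_top]
    rintro rfl
    obtain ⟨s, hs⟩ := exists_ne (0 : S)
    exact hs ((h s).choose_spec.symm)
  have hsup : LinearMap.range φ ⊔ LinearMap.ker θ = ⊤ := by
    refine eq_top_iff.2 fun w _ ↦ ?_
    obtain ⟨v, hv⟩ := h (θ w)
    refine Submodule.mem_sup.2 ⟨φ v, ⟨v, rfl⟩, w - φ v, ?_, add_sub_cancel _ _⟩
    rw [LinearMap.mem_ker, map_sub, ← hv, LinearMap.comp_apply, sub_self]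
  exact LinearMap.range_eq_top.1 ((hW.2 hsup).resolve_right hker)

lemma nonempty_linearEquiv_of_projective_cover [Nontrivial S] [Module.Projective R W]
    (hW : SupIrred (⊤ : Submodule R W)) (θ : W →ₗ[R] S) (hθ : Function.Surjective θ)
    [Module.Projective R V] (hV : IsIndecomposable R V) (π : V →ₗ[R] S)
    (hπ : Function.Surjective π) : Nonempty (V ≃ₗ[R] W) := by
  obtain ⟨φ, hφ⟩ := Module.projective_lifting_property θ π hθ
  have hφ' : Function.Surjective φ :=
    surjective_of_surjective_comp_of_supIrred_top hW φ θ (hφ ▸ hπ)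
  obtain ⟨ψ, hψ⟩ := Module.projective_lifting_property φ .id hφ'
  have hψ' (w : W) : φ (ψ w) = w := LinearMap.congr_fun hψ w
  have hcompl : IsCompl (LinearMap.range ψ) (LinearMap.ker φ) := by
    refine ⟨Submodule.disjoint_def.2 ?_, codisjoint_iff.2 (eq_top_iff.2 fun v _ ↦ ?_)⟩
    · rintro _ ⟨w, rfl⟩ hw
      rw [← hψ' w, LinearMap.mem_ker.1 hw, map_zero]
    · refine Submodule.mem_sup.2 ⟨ψ (φ v), ⟨φ v, rfl⟩, v - ψ (φ v), ?_, add_sub_cancel _ _⟩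
      rw [LinearMap.mem_ker, map_sub, hψ', sub_self]
  refine ⟨LinearEquiv.ofBijective φ ⟨LinearMap.ker_eq_bot.1 ?_, hφ'⟩⟩
  refine (hV.2 _ _ hcompl).resolve_left fun hψ₀ ↦ hW.ne_bot ?_
  rw [LinearMap.range_eq_bot] at hψ₀
  rw [← LinearMap.range_id, ← hψ, hψ₀, LinearMap.comp_zero, LinearMap.range_zero]

end ProjectiveCover

universe u

lemma exists_isSimpleModule_linearMap_ne_zero (k R : Type*) (M : Type u) [CommRing k] [Ring R]
    [Algebra k R] [AddCommGroup M] [Module R M] [Module.Finite R M] [Nontrivial M] :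
    ∃ (S : Type u) (_ : AddCommGroup S) (_ : Module k S) (_ : Module R S),
      IsScalarTower k R S ∧ IsSimpleModule R S ∧ ∃ π : M →ₗ[R] S, π ≠ 0 := by
  obtain ⟨N, hN⟩ := IsCoatomic.exists_coatom (Submodule R M)
  have hS : IsSimpleModule R (M ⧸ N) := isSimpleModule_iff_isCoatom.2 hN
  have := hS.nontrivial
  let _ : Module k (M ⧸ N) := Module.compHom _ (algebraMap k R)
  exact ⟨M ⧸ N, inferInstance, inferInstance, inferInstance, .of_algebraMap_smul fun _ _ ↦ rfl, hS,
    N.mkQ, LinearMap.ne_zero_of_surjective N.mkQ_surjective⟩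

/-! ### Relations in `ũ_q(sl₂)` -/

lemma pow_sq_eq_one_of_pow_eq {G : Type*} [Monoid G] {x y : G} {n : ℕ} (hx : x ^ n = 1)
    (hy : y ^ n = (x ^ (n - 1)) ^ 2) : y ^ n ^ 2 = 1 := by
  rw [pow_two, pow_mul, hy, pow_right_comm, pow_right_comm x, hx, one_pow, one_pow]

lemma QCommute.of_conj {k A : Type*} [Field k] [Ring A] [Algebra k A] {c : k} {x x' y : A}
    (hx : x' * x = 1) (h : x * y * x' = c • y) : QCommute c x y := by
  rw [QCommute, ← smul_mul_assoc, ← h, mul_assoc, hx, mul_one]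

section Relations

variable {k : Type} [Field k] {n : ℕ} {q : k}

variable (k n q) in
/-- The element `L = K⁻¹K̂`, whose eigenprojections are the `φ_{2i}`. -/
def L : U k n q := Kinv k n q * Kh k n q

variable (k n q) in
/-- The involution `T = KK̂^(n/2)`, whose eigenprojections are `𝟙₀` and `𝟙₁`. -/
def T : U k n q := K k n q * Kh k n q ^ (n / 2)

local notation "𝖪" => K k n q
local notation "𝖧" => Kh k n q
local notation "𝖤" => E k n q
local notation "𝖥" => F k n q
local notation "𝖫" => L k n q
local notation "𝖳" => T k n q

/-- The standing assumptions on the parameters of `ũ_q(sl₂)`. -/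
structure Admissible (n : ℕ) (q : k) : Prop where
  pos : 0 < n
  four_dvd : 4 ∣ n
  isPrimitiveRoot : IsPrimitiveRoot q (n ^ 2)

namespace Admissible

lemma q_ne_zero (H : Admissible n q) : q ≠ 0 :=
  H.isPrimitiveRoot.ne_zero (pow_ne_zero 2 H.pos.ne')

lemma exists_eq_four_mul (H : Admissible n q) : ∃ m, 0 < m ∧ n = 4 * m := by
  obtain ⟨m, rfl⟩ := H.four_dvd
  exact ⟨m, by simpa using H.pos, rfl⟩

lemma half_mul_two (H : Admissible n q) : n ^ 2 / 2 * 2 = n ^ 2 :=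
  Nat.div_mul_cancel (dvd_pow ((by norm_num : 2 ∣ 4).trans H.four_dvd) two_ne_zero)

lemma one_lt_sq (H : Admissible n q) : 1 < n ^ 2 := by
  obtain ⟨m, hm, rfl⟩ := H.exists_eq_four_mul
  nlinarith

lemma pow_half (H : Admissible n q) : q ^ (n ^ 2 / 2) = -1 :=
  (H.isPrimitiveRoot.pow (by have := H.pos; positivity)
    H.half_mul_two.symm).eq_neg_one_of_two_right

lemma isPrimitiveRoot_sq (H : Admissible n q) : IsPrimitiveRoot (q ^ 2) (n ^ 2 / 2) :=
  H.isPrimitiveRoot.pow (by have := H.pos; positivity) (by rw [mul_comm, H.half_mul_two])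

lemma isPrimitiveRoot_neg_one (H : Admissible n q) : IsPrimitiveRoot (-1 : k) 2 :=
  H.pow_half ▸ H.isPrimitiveRoot.pow (by have := H.pos; positivity) H.half_mul_two.symm

lemma half_pos (H : Admissible n q) : 0 < n ^ 2 / 2 := by
  have := H.one_lt_sq
  omega

lemma sq_pow_eq_sq_pow_iff (H : Admissible n q) {s s' : ℕ} :
    (q ^ 2) ^ s = (q ^ 2) ^ s' ↔ s ≡ s' [MOD n ^ 2 / 2] := by
  rw [(H.isPrimitiveRoot_sq.isOfFinOrder H.half_pos.ne').pow_eq_pow_iff_modEq,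
    ← H.isPrimitiveRoot_sq.eq_orderOf]

lemma neg_one_pow_eq_neg_one_pow_iff (H : Admissible n q) {j j' : ℕ} :
    (-1 : k) ^ j = (-1) ^ j' ↔ j ≡ j' [MOD 2] := by
  rw [(H.isPrimitiveRoot_neg_one.isOfFinOrder two_ne_zero).pow_eq_pow_iff_modEq,
    ← H.isPrimitiveRoot_neg_one.eq_orderOf]

end Admissible

lemma K_pow : 𝖪 ^ n = 1 := by
  simpa only [K, map_pow, map_one] using RingQuot.mkAlgHom_rel k (Rel.Kord (n := n) (q := q))

lemma Kh_pow : 𝖧 ^ n = (𝖪 ^ (n - 1)) ^ 2 := by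
  simpa only [K, Kh, map_pow] using RingQuot.mkAlgHom_rel k (Rel.Khord (n := n) (q := q))

lemma commute_K_Kh : Commute 𝖪 𝖧 := by
  simpa only [K, Kh, map_mul, commute_iff_eq]
    using RingQuot.mkAlgHom_rel k (Rel.KKh (n := n) (q := q))

lemma E_pow : 𝖤 ^ n ^ 2 = 0 := by
  simpa only [E, map_pow, map_zero] using RingQuot.mkAlgHom_rel k (Rel.Enil (n := n) (q := q))

lemma F_pow : 𝖥 ^ n ^ 2 = 0 := by
  simpa only [F, map_pow, map_zero] using RingQuot.mkAlgHom_rel k (Rel.Fnil (n := n) (q := q))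

lemma F_mul_E : 𝖥 * 𝖤 = q⁻¹ • (𝖤 * 𝖥) + (1 - 𝖫) := by
  refine sub_eq_iff_eq_add'.1 ?_
  simpa only [L, Kinv, K, Kh, E, F, map_sub, map_mul, map_pow, map_smul, map_one]
    using RingQuot.mkAlgHom_rel k (Rel.EF (n := n) (q := q))

lemma Kh_pow_sq : 𝖧 ^ n ^ 2 = 1 :=
  pow_sq_eq_one_of_pow_eq K_pow Kh_pow

lemma L_pow_n : 𝖫 ^ n = (𝖪 ^ (n - 1)) ^ 2 := by
  rw [L, Kinv, (commute_K_Kh.pow_left _).mul_pow, ← pow_mul, mul_comm (n - 1), pow_mul, K_pow,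
    one_pow, Kh_pow, one_mul]

lemma commute_K_L : Commute 𝖪 𝖫 :=
  ((Commute.refl 𝖪).pow_right _).mul_right commute_K_Kh

namespace Admissible

lemma K_pow_pred_mul (H : Admissible n q) : 𝖪 ^ (n - 1) * 𝖪 = 1 := by
  rw [← pow_succ, Nat.sub_add_cancel H.pos, K_pow]

lemma Kh_pow_pred_mul (H : Admissible n q) : 𝖧 ^ (n ^ 2 - 1) * 𝖧 = 1 := by
  rw [← pow_succ, Nat.sub_add_cancel (pow_pos H.pos 2), Kh_pow_sq]

lemma qCommute_K_E (H : Admissible n q) : QCommute (q ^ n) 𝖪 𝖤 := by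
  refine .of_conj H.K_pow_pred_mul ?_
  simpa only [K, E, map_mul, map_pow, map_smul]
    using RingQuot.mkAlgHom_rel k (Rel.KE (n := n) (q := q))

lemma qCommute_K_F (H : Admissible n q) : QCommute (q ^ n)⁻¹ 𝖪 𝖥 := by
  refine .of_conj H.K_pow_pred_mul ?_
  simpa only [K, F, map_mul, map_pow, map_smul]
    using RingQuot.mkAlgHom_rel k (Rel.KF (n := n) (q := q))

lemma qCommute_Kh_E (H : Admissible n q) : QCommute (q ^ n * (q ^ 2)⁻¹) 𝖧 𝖤 := by
  refine .of_conj H.Kh_pow_pred_mul ?_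
  simpa only [Kh, E, map_mul, map_pow, map_smul]
    using RingQuot.mkAlgHom_rel k (Rel.KhE (n := n) (q := q))

lemma qCommute_Kh_F (H : Admissible n q) : QCommute ((q ^ n)⁻¹ * q ^ 2) 𝖧 𝖥 := by
  refine .of_conj H.Kh_pow_pred_mul ?_
  simpa only [Kh, F, map_mul, map_pow, map_smul]
    using RingQuot.mkAlgHom_rel k (Rel.KhF (n := n) (q := q))

lemma q_pow_pow_pred (H : Admissible n q) : (q ^ n) ^ (n - 1) * q ^ n = 1 := by
  rw [← pow_succ, Nat.sub_add_cancel H.pos, ← pow_mul, ← pow_two, H.isPrimitiveRoot.pow_eq_one]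

lemma qCommute_L_E (H : Admissible n q) : QCommute (q ^ 2)⁻¹ 𝖫 𝖤 := by
  have h := (H.qCommute_K_E.pow_left (n - 1)).mul_left H.qCommute_Kh_E
  rwa [← mul_assoc, H.q_pow_pow_pred, one_mul] at h

lemma qCommute_L_F (H : Admissible n q) : QCommute (q ^ 2) 𝖫 𝖥 := by
  have h := (H.qCommute_K_F.pow_left (n - 1)).mul_left H.qCommute_Kh_F
  rwa [← mul_assoc, inv_pow, ← mul_inv, H.q_pow_pow_pred, inv_one, one_mul] at h

lemma q_pow_mul_pow_half (H : Admissible n q) : q ^ n * (q ^ n * (q ^ 2)⁻¹) ^ (n / 2) = -1 := by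
  obtain ⟨m, -, hn⟩ := H.exists_eq_four_mul
  have hcancel : q ^ n * (q ^ 2)⁻¹ ^ (n / 2) = 1 := by
    rw [inv_pow, ← pow_mul, show 2 * (n / 2) = n by omega,
      mul_inv_cancel₀ (pow_ne_zero _ H.q_ne_zero)]
  rw [mul_pow, mul_left_comm, hcancel, mul_one, ← pow_mul, ← H.pow_half]
  rw [hn, show 4 * m / 2 = 2 * m by omega,
    Nat.div_eq_of_eq_mul_left two_pos (show (4 * m) ^ 2 = 4 * m * (2 * m) * 2 by ring)]

lemma qCommute_T_E (H : Admissible n q) : QCommute (-1 : k) 𝖳 𝖤 := by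
  have h := H.qCommute_K_E.mul_left (H.qCommute_Kh_E.pow_left (n / 2))
  rwa [H.q_pow_mul_pow_half] at h

lemma qCommute_T_F (H : Admissible n q) : QCommute (-1 : k) 𝖳 𝖥 := by
  have h := H.qCommute_K_F.mul_left (H.qCommute_Kh_F.pow_left (n / 2))
  rwa [show (q ^ n)⁻¹ * q ^ 2 = (q ^ n * (q ^ 2)⁻¹)⁻¹ by rw [mul_inv, inv_inv], inv_pow, ← mul_inv,
    H.q_pow_mul_pow_half, inv_neg_one] at h

lemma qTriple (H : Admissible n q) : QTriple q 𝖫 𝖤 𝖥 :=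
  ⟨H.q_ne_zero, F_mul_E, H.qCommute_L_E, H.qCommute_L_F⟩

lemma Kh_eq (H : Admissible n q) : 𝖧 = 𝖪 * 𝖫 := by
  rw [L, Kinv, ← mul_assoc, ← pow_succ', Nat.sub_add_cancel H.pos, K_pow, one_mul]

lemma L_pow_half (H : Admissible n q) : 𝖫 ^ (n ^ 2 / 2) = 1 := by
  obtain ⟨m, -, hn⟩ := H.exists_eq_four_mul
  rw [show n ^ 2 / 2 = n * (2 * m) from
    Nat.div_eq_of_eq_mul_left two_pos (by rw [hn]; ring), pow_mul, L_pow_n, ← pow_mul,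
    ← mul_assoc, show 2 * 2 * m = n by rw [hn], ← pow_mul, mul_comm, pow_mul, K_pow, one_pow]

lemma T_sq (H : Admissible n q) : 𝖳 ^ 2 = 1 := by
  obtain ⟨m, -, hn⟩ := H.exists_eq_four_mul
  rw [T, (commute_K_Kh.pow_right _).mul_pow, ← pow_mul, show n / 2 * 2 = n by omega, Kh_pow,
    ← ((Commute.refl 𝖪).pow_right _).mul_pow, ← pow_succ', Nat.sub_add_cancel H.pos, K_pow, one_pow]

/-- The exponent arises from `T = K ^ (1 + n / 2) L ^ (n / 2)` and `L ^ n = K ^ (-2)`. -/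
lemma K_eq (H : Admissible n q) : 𝖪 = 𝖳 * 𝖫 ^ (n * (n / 4) - n / 2) := by
  obtain ⟨m, hm, hn⟩ := H.exists_eq_four_mul
  have hexp : n / 2 + (n * (n / 4) - n / 2) = n * m := by
    have := Nat.le_mul_of_pos_right n hm
    rw [show n / 4 = m by omega]
    omega
  rw [T, H.Kh_eq, commute_K_L.mul_pow, mul_assoc, mul_assoc, ← pow_add, hexp, pow_mul, L_pow_n,
    ← pow_mul (𝖪 ^ (n - 1))]
  rw [show n / 2 = 2 * m by omega, ← ((Commute.refl 𝖪).pow_right _).mul_pow, ← pow_succ',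
    Nat.sub_add_cancel H.pos, K_pow, one_pow, mul_one]

end Admissible

end Relations

/-! ### The torus and weight spaces -/

section Torus

variable {k : Type} [Field k] {n : ℕ} {q : k}

local notation "𝖪" => K k n q
local notation "𝖧" => Kh k n q
local notation "𝖤" => E k n q
local notation "𝖥" => F k n q
local notation "𝖫" => L k n q
local notation "𝖳" => T k n q

variable (k n q) in
/-- The commutative subalgebra generated by the group-like elements `K` and `K̂`. -/
def torus : Subalgebra k (U k n q) := Algebra.adjoin k {𝖪, 𝖧}

lemma K_mem_torus : 𝖪 ∈ torus k n q := Algebra.subset_adjoin (Set.mem_insert _ _)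

lemma Kh_mem_torus : 𝖧 ∈ torus k n q :=
  Algebra.subset_adjoin (Set.mem_insert_of_mem _ rfl)

lemma L_mem_torus : 𝖫 ∈ torus k n q := mul_mem (pow_mem K_mem_torus _) Kh_mem_torus

lemma T_mem_torus : 𝖳 ∈ torus k n q := mul_mem K_mem_torus (pow_mem Kh_mem_torus _)

lemma exists_torus_mul_eq {x h : U k n q} {c d : k} (hK : QCommute c 𝖪 x) (hKh : QCommute d 𝖧 x)
    (hc : c ≠ 0) (hd : d ≠ 0) (hh : h ∈ torus k n q) : ∃ h' ∈ torus k n q, x * h = h' * x := by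
  induction hh using Algebra.adjoin_induction with
  | mem h hmem =>
    obtain rfl | rfl := hmem
    · exact ⟨c⁻¹ • 𝖪, Subalgebra.smul_mem _ K_mem_torus _,
        (hK.symm hc).trans (smul_mul_assoc _ _ _).symm⟩
    · exact ⟨d⁻¹ • 𝖧, Subalgebra.smul_mem _ Kh_mem_torus _,
        (hKh.symm hd).trans (smul_mul_assoc _ _ _).symm⟩
  | algebraMap a => exact ⟨algebraMap k _ a, Subalgebra.algebraMap_mem _ a,
      (Algebra.commutes a x).symm⟩
  | add h₁ h₂ _ _ ih₁ ih₂ =>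
    obtain ⟨h₁', hm₁, e₁⟩ := ih₁
    obtain ⟨h₂', hm₂, e₂⟩ := ih₂
    exact ⟨h₁' + h₂', add_mem hm₁ hm₂, by rw [mul_add, add_mul, e₁, e₂]⟩
  | mul h₁ h₂ _ _ ih₁ ih₂ =>
    obtain ⟨h₁', hm₁, e₁⟩ := ih₁
    obtain ⟨h₂', hm₂, e₂⟩ := ih₂
    exact ⟨h₁' * h₂', mul_mem hm₁ hm₂, by rw [← mul_assoc, e₁, mul_assoc, e₂, mul_assoc]⟩

namespace Admissible

lemma exists_E_mul_torus_eq (H : Admissible n q) {h : U k n q} (hh : h ∈ torus k n q) :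
    ∃ h' ∈ torus k n q, 𝖤 * h = h' * 𝖤 :=
  have hq := H.q_ne_zero
  exists_torus_mul_eq H.qCommute_K_E H.qCommute_Kh_E (by positivity) (by positivity) hh

lemma exists_F_mul_torus_eq (H : Admissible n q) {h : U k n q} (hh : h ∈ torus k n q) :
    ∃ h' ∈ torus k n q, 𝖥 * h = h' * 𝖥 :=
  have hq := H.q_ne_zero
  exists_torus_mul_eq H.qCommute_K_F H.qCommute_Kh_F (by positivity) (by positivity) hh

end Admissible

lemma exists_eq_K_pow_mul_Kh_pow {x : U k n q} (hx : x ∈ Submonoid.closure {𝖪, 𝖧}) :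
    ∃ c d : ℕ, x = 𝖪 ^ c * 𝖧 ^ d := by
  induction hx using Submonoid.closure_induction with
  | mem x hx =>
    obtain rfl | rfl := hx
    · exact ⟨1, 0, by simp⟩
    · exact ⟨0, 1, by simp⟩
  | one => exact ⟨0, 0, by simp⟩
  | mul x y _ _ hx hy =>
    obtain ⟨a, b, rfl⟩ := hx
    obtain ⟨c, d, rfl⟩ := hy
    exact ⟨a + c, b + d, by
      rw [mul_assoc, ((commute_K_Kh.symm.pow_pow b c).left_comm), ← pow_add, ← mul_assoc,
        ← pow_add]⟩

lemma Admissible.F_pow_mul_torus_mul_E_pow_mem_pbw (H : Admissible n q) {h : U k n q}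
    (hh : h ∈ torus k n q) {a : ℕ} (ha : a ≤ n ^ 2 - 2) (b : ℕ) :
    𝖥 ^ a * h * 𝖤 ^ b ∈ pbw k n q := by
  obtain hb | hb := le_or_gt (n ^ 2) b
  · rw [pow_eq_zero_of_le hb E_pow, mul_zero]
    exact zero_mem _
  suffices Subalgebra.toSubmodule (torus k n q) ≤ (pbw k n q).comap
      (LinearMap.mulRight k (𝖤 ^ b) ∘ₗ LinearMap.mulLeft k (𝖥 ^ a)) from this hh
  rw [torus, Algebra.adjoin_eq_span, Submodule.span_le]
  intro x hx
  obtain ⟨c, d, rfl⟩ := exists_eq_K_pow_mul_Kh_pow hx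
  have hc := Nat.mod_lt c H.pos
  have hd := Nat.mod_lt d (pow_pos H.pos 2)
  rw [pow_eq_pow_mod c K_pow, pow_eq_pow_mod d Kh_pow_sq]
  exact Submodule.subset_span ⟨a, b, c % n, d % n ^ 2, ha, by omega, by omega, by omega,
    by simp [mul_assoc]⟩

/-! ### Weight spaces -/

section WeightSpace

variable {V : Type*} [AddCommGroup V] [Module k V] [Module (U k n q) V]
  [IsScalarTower k (U k n q) V] {v : V} {s j : ℕ}

variable (k n q V) in
/-- The space of vectors on which `L` acts by `q ^ (2 * s)` and `T` by `(-1) ^ j`. The element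
`e_{2i,j}` is the projection onto the weight space with `s = i`. -/
def weightSpace (s j : ℕ) : Submodule k V where
  carrier := {v | 𝖫 • v = (q ^ 2) ^ s • v ∧ 𝖳 • v = (-1 : k) ^ j • v}
  add_mem' hv hw := by
    simp only [Set.mem_ofPred_eq, smul_add] at *
    simp only [hv, hw, and_self]
  zero_mem' := by simp
  smul_mem' c v hv := by
    simp only [Set.mem_ofPred_eq, smul_comm _ c] at *
    simp only [hv, and_self]

lemma weightSpace_congr (H : Admissible n q) {s' j' : ℕ} (hs : s ≡ s' [MOD n ^ 2 / 2])
    (hj : j ≡ j' [MOD 2]) : weightSpace k n q V s j = weightSpace k n q V s' j' := by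
  simp only [weightSpace, H.sq_pow_eq_sq_pow_iff.2 hs, H.neg_one_pow_eq_neg_one_pow_iff.2 hj]

lemma F_smul_mem_weightSpace (H : Admissible n q) (hv : v ∈ weightSpace k n q V s j) :
    𝖥 • v ∈ weightSpace k n q V (s + 1) (j + 1) := by
  refine ⟨(H.qCommute_L_F.smul_smul_eq hv.1).trans ?_, (H.qCommute_T_F.smul_smul_eq hv.2).trans ?_⟩
  · rw [← pow_succ']
  · rw [← pow_succ']

lemma E_smul_mem_weightSpace (H : Admissible n q) (hv : v ∈ weightSpace k n q V (s + 1) j) :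
    𝖤 • v ∈ weightSpace k n q V s (j + 1) := by
  refine ⟨(H.qCommute_L_E.smul_smul_eq hv.1).trans ?_, (H.qCommute_T_E.smul_smul_eq hv.2).trans ?_⟩
  · rw [pow_succ' (q ^ 2), inv_mul_cancel_left₀ (pow_ne_zero 2 H.q_ne_zero)]
  · rw [← pow_succ']

lemma F_pow_smul_mem_weightSpace (H : Admissible n q) (hv : v ∈ weightSpace k n q V s j) (a : ℕ) :
    𝖥 ^ a • v ∈ weightSpace k n q V (s + a) (j + a) := by
  induction a with
  | zero => simpa using hv
  | succ a ih =>
    rw [pow_succ', mul_smul]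
    exact F_smul_mem_weightSpace H ih

lemma E_pow_smul_mem_weightSpace (H : Admissible n q) (b : ℕ)
    (hv : v ∈ weightSpace k n q V (s + b) j) : 𝖤 ^ b • v ∈ weightSpace k n q V s (j + b) := by
  induction b generalizing s with
  | zero => simpa using hv
  | succ b ih =>
    rw [pow_succ', mul_smul]
    exact E_smul_mem_weightSpace H (ih (by rwa [add_right_comm, add_assoc]))

end WeightSpace

lemma Admissible.exists_torus_smul_eq (H : Admissible n q) {h : U k n q} (hh : h ∈ torus k n q)
    (s j : ℕ) : ∃ c : k, ∀ (V : Type) [AddCommGroup V] [Module k V] [Module (U k n q) V]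
      [IsScalarTower k (U k n q) V], ∀ v ∈ weightSpace k n q V s j, h • v = c • v := by
  have hK : ∃ c : k, ∀ (V : Type) [AddCommGroup V] [Module k V] [Module (U k n q) V]
      [IsScalarTower k (U k n q) V], ∀ v ∈ weightSpace k n q V s j, 𝖪 • v = c • v := by
    refine ⟨((q ^ 2) ^ s) ^ (n * (n / 4) - n / 2) * (-1) ^ j, fun V _ _ _ _ v hv ↦ ?_⟩
    rw [H.K_eq, mul_smul, pow_smul_eq_of_smul_eq hv.1, smul_comm, hv.2, smul_smul]
  induction hh using Algebra.adjoin_induction with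
  | mem h hmem =>
    obtain rfl | rfl := hmem
    · exact hK
    · obtain ⟨c, hc⟩ := hK
      refine ⟨(q ^ 2) ^ s * c, fun V _ _ _ _ v hv ↦ ?_⟩
      rw [H.Kh_eq, mul_smul, hv.1, smul_comm, hc V v hv, smul_smul]
  | algebraMap a => exact ⟨a, fun V _ _ _ _ v _ ↦ algebraMap_smul _ a v⟩
  | add h₁ h₂ _ _ ih₁ ih₂ =>
    obtain ⟨c₁, hc₁⟩ := ih₁
    obtain ⟨c₂, hc₂⟩ := ih₂
    exact ⟨c₁ + c₂, fun V _ _ _ _ v hv ↦ by rw [add_smul, add_smul, hc₁ V v hv, hc₂ V v hv]⟩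
  | mul h₁ h₂ _ _ ih₁ ih₂ =>
    obtain ⟨c₁, hc₁⟩ := ih₁
    obtain ⟨c₂, hc₂⟩ := ih₂
    refine ⟨c₂ * c₁, fun V _ _ _ _ v hv ↦ ?_⟩
    rw [mul_smul, hc₂ V v hv, smul_comm, hc₁ V v hv, smul_smul]

end Torus

/-! ### Weight idempotents -/

section Idempotents

variable {k : Type} [Field k] {n : ℕ} {q : k}

local notation "𝖪" => K k n q
local notation "𝖧" => Kh k n q
local notation "𝖤" => E k n q
local notation "𝖥" => F k n q
local notation "𝖫" => L k n q
local notation "𝖳" => T k n q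

variable {V : Type*} [AddCommGroup V] [Module (U k n q) V] {i j : ℕ} {v : V}

lemma exists_F_smul_eq_zero [Nontrivial V] : ∃ v : V, v ≠ 0 ∧ 𝖥 • v = 0 := by
  obtain ⟨w, hw⟩ := exists_ne (0 : V)
  have hex : ∃ s, 𝖥 ^ s • w = 0 := ⟨n ^ 2, by rw [F_pow, zero_smul]⟩
  classical
  obtain ⟨s, hs⟩ : ∃ s, Nat.find hex = s + 1 :=
    Nat.exists_eq_succ_of_ne_zero fun h ↦ hw (by simpa [h] using Nat.find_spec hex)
  refine ⟨𝖥 ^ s • w, Nat.find_min hex (by omega), ?_⟩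
  rw [smul_smul, ← pow_succ', ← hs]
  exact Nat.find_spec hex

variable [Module k V] [IsScalarTower k (U k n q) V]

lemma oneJ_eq_eigenProj (hj : j ≤ 1) : oneJ k n q j = eigenProj (-1 : k) 2 𝖳 j := by
  interval_cases j
  · rw [oneJ, if_pos rfl, eigenProj_neg_one_zero, T]
  · rw [oneJ, if_neg one_ne_zero, eigenProj_neg_one_one, T]

namespace Admissible

lemma half_cast_ne_zero (H : Admissible n q) : ((n ^ 2 / 2 : ℕ) : k) ≠ 0 :=
  have : NeZero (n ^ 2 / 2) := ⟨H.half_pos.ne'⟩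
  H.isPrimitiveRoot_sq.neZero'.out

lemma two_cast_ne_zero (H : Admissible n q) : ((2 : ℕ) : k) ≠ 0 :=
  H.isPrimitiveRoot_neg_one.neZero'.out

lemma phi_eq_eigenProj (H : Admissible n q) (i : ℕ) :
    phi k n q i = eigenProj (q ^ 2) (n ^ 2 / 2) 𝖫 i := by
  have htwo : (2 : k) ≠ 0 := mod_cast H.two_cast_ne_zero
  have hscalar : (n ^ 2 : k)⁻¹ * 2 = ((n ^ 2 / 2 : ℕ) : k)⁻¹ := by
    rw [← Nat.cast_pow, ← H.half_mul_two, Nat.cast_mul, Nat.cast_two, mul_inv,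
      inv_mul_cancel_right₀ htwo, H.half_mul_two]
  rw [phi, hscalar]
  simp only [eigenProj, ← inv_pow, ← pow_mul, mul_assoc, L]

lemma eIdem_mem_torus (H : Admissible n q) (hj : j ≤ 1) : eIdem k n q i j ∈ torus k n q := by
  rw [eIdem, H.phi_eq_eigenProj, oneJ_eq_eigenProj hj]
  exact mul_mem (eigenProj_mem _ L_mem_torus) (eigenProj_mem _ T_mem_torus)

lemma eIdem_smul_of_mem_weightSpace (H : Admissible n q) (hj : j ≤ 1)
    (hv : v ∈ weightSpace k n q V i j) : eIdem k n q i j • v = v := by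
  rw [eIdem, H.phi_eq_eigenProj, oneJ_eq_eigenProj hj, mul_smul,
    eigenProj_smul_of_smul_eq H.two_cast_ne_zero (neg_ne_zero.2 one_ne_zero) hv.2,
    eigenProj_smul_of_smul_eq H.half_cast_ne_zero (pow_ne_zero 2 H.q_ne_zero) hv.1]

lemma commute_T_L : Commute 𝖳 𝖫 :=
  commute_K_L.mul_left ((commute_K_Kh.symm.pow_right _ |>.mul_right (.refl _)).pow_left _)

lemma eIdem_mem_weightSpace (H : Admissible n q) (hj : j ≤ 1) :
    eIdem k n q i j ∈ weightSpace k n q (U k n q) i j := by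
  rw [eIdem, H.phi_eq_eigenProj, oneJ_eq_eigenProj hj]
  refine ⟨?_, ?_⟩
  · rw [smul_eq_mul, ← mul_assoc, mul_eigenProj (pow_ne_zero 2 H.q_ne_zero)
      H.isPrimitiveRoot_sq.pow_eq_one H.L_pow_half, smul_mul_assoc]
  · have hcomm : Commute 𝖳 (eigenProj (q ^ 2) (n ^ 2 / 2) 𝖫 i) :=
      (Commute.sum_right _ _ _ fun t _ ↦ (commute_T_L.pow_right t).smul_right _).smul_right _
    rw [smul_eq_mul, hcomm.left_comm, mul_eigenProj (neg_ne_zero.2 one_ne_zero)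
      H.isPrimitiveRoot_neg_one.pow_eq_one H.T_sq, mul_smul_comm]

lemma sum_eIdem (H : Admissible n q) :
    ∑ i ∈ Finset.range (n ^ 2 / 2), ∑ j ∈ Finset.range 2, eIdem k n q i j = 1 := by
  have honeJ : ∑ j ∈ Finset.range 2, oneJ k n q j = 1 := by
    rw [← sum_eigenProj H.isPrimitiveRoot_neg_one H.two_cast_ne_zero 𝖳]
    exact Finset.sum_congr rfl fun j hj ↦
      oneJ_eq_eigenProj (Nat.lt_succ_iff.1 (Finset.mem_range.1 hj))
  simp only [eIdem, ← Finset.mul_sum, honeJ, mul_one, H.phi_eq_eigenProj,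
    sum_eigenProj H.isPrimitiveRoot_sq H.half_cast_ne_zero]

lemma smul_mem_weightSpace {x : U k n q} (hx : x ∈ weightSpace k n q (U k n q) i j) (v : V) :
    x • v ∈ weightSpace k n q V i j := by
  refine ⟨?_, ?_⟩
  · rw [smul_smul, ← smul_eq_mul, hx.1, smul_assoc]
  · rw [smul_smul, ← smul_eq_mul, hx.2, smul_assoc]

/-! ### Lowest weight vectors -/

lemma exists_lowest_weight_vector (H : Admissible n q) [Nontrivial V] :
    ∃ i j : ℕ, i < n ^ 2 / 2 ∧ j ≤ 1 ∧ ∃ v ∈ weightSpace k n q V i j, v ≠ 0 ∧ 𝖥 • v = 0 := by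
  obtain ⟨w, hw, hFw⟩ := exists_F_smul_eq_zero (k := k) (n := n) (q := q) (V := V)
  by_contra! hcon
  refine hw ?_
  rw [← one_smul (U k n q) w, ← H.sum_eIdem, Finset.sum_smul]
  refine Finset.sum_eq_zero fun i hi ↦ ?_
  rw [Finset.sum_smul]
  refine Finset.sum_eq_zero fun j hj ↦ by_contra fun hne ↦ ?_
  have hj' : j ≤ 1 := Nat.lt_succ_iff.1 (Finset.mem_range.1 hj)
  refine hcon i j (Finset.mem_range.1 hi) hj' _
    (smul_mem_weightSpace (H.eIdem_mem_weightSpace hj') w) hne ?_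
  obtain ⟨h', -, hcross⟩ := H.exists_F_mul_torus_eq (H.eIdem_mem_torus (i := i) hj')
  rw [smul_smul, hcross, mul_smul, hFw, smul_zero]

end Admissible

/-! ### Submodules spanned by polynomials in `E` -/

lemma adjoin_generators : Algebra.adjoin k {𝖪, 𝖧, 𝖤, 𝖥} = ⊤ := by
  have hsurj := RingQuot.mkAlgHom_surjective k (Rel k n q)
  rw [← AlgHom.range_eq_top] at hsurj
  rw [← hsurj, ← Algebra.map_top, ← FreeAlgebra.adjoin_range_ι, AlgHom.map_adjoin]
  congr 1
  ext x
  simp [K, Kh, E, F, Fin.exists_fin_succ, eq_comm]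

lemma Admissible.smul_mem_of_generators_smul_mem (H : Admissible n q) (p : Submodule k V)
    (hL : ∀ v ∈ p, 𝖫 • v ∈ p) (hT : ∀ v ∈ p, 𝖳 • v ∈ p) (hE : ∀ v ∈ p, 𝖤 • v ∈ p)
    (hF : ∀ v ∈ p, 𝖥 • v ∈ p) (x : U k n q) (hv : v ∈ p) : x • v ∈ p := by
  have hLpow (t : ℕ) : ∀ v ∈ p, 𝖫 ^ t • v ∈ p := by
    induction t with
    | zero => simp
    | succ t ih => exact fun v hv ↦ by rw [pow_succ, mul_smul]; exact ih _ (hL v hv)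
  have hK (v) (hv : v ∈ p) : 𝖪 • v ∈ p := by
    rw [H.K_eq, mul_smul]
    exact hT _ (hLpow _ _ hv)
  have hx : x ∈ Algebra.adjoin k {𝖪, 𝖧, 𝖤, 𝖥} := by
    rw [adjoin_generators]
    exact Algebra.mem_top
  induction hx using Algebra.adjoin_induction generalizing v with
  | mem x hx =>
    obtain rfl | rfl | rfl | rfl := hx
    · exact hK v hv
    · rw [H.Kh_eq, mul_smul]
      exact hK _ (hL v hv)
    · exact hE v hv
    · exact hF v hv
  | algebraMap a =>
    rw [algebraMap_smul]
    exact p.smul_mem a hv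
  | add x y _ _ hx hy =>
    rw [add_smul]
    exact add_mem (hx hv) (hy hv)
  | mul x y _ _ hx hy =>
    rw [mul_smul]
    exact hx (hy hv)

end Idempotents

/-! ### Modules induced from a character of the torus -/

section Induced

variable {k : Type} [Field k] {N : ℕ}

variable (k N) in
/-- The underlying space of the module induced from a character of the torus, with basis
`E ^ b F ^ a v` for `a, b < N`. -/
abbrev Induced : Type := Fin N × Fin N →₀ k

namespace Induced

variable (k N) in
/-- The vector `E ^ b F ^ a v`, which is zero unless `a, b < N`. -/
def vec (b a : ℕ) : Induced k N :=
  if h : b < N ∧ a < N then Finsupp.single (⟨b, h.1⟩, ⟨a, h.2⟩) 1 else 0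

lemma vec_eq_zero {b a : ℕ} (h : ¬(b < N ∧ a < N)) : vec k N b a = 0 := dif_neg h

lemma vec_ne_zero {b a : ℕ} (hb : b < N) (ha : a < N) : vec k N b a ≠ 0 := by
  rw [vec, dif_pos ⟨hb, ha⟩]
  exact Finsupp.single_ne_zero.2 one_ne_zero

/-- The linear map with prescribed values on the vectors `E ^ b F ^ a v`. -/
def linearMap {M : Type*} [AddCommGroup M] [Module k M] (g : ℕ → ℕ → M) : Induced k N →ₗ[k] M :=
  Finsupp.linearCombination k fun p : Fin N × Fin N ↦ g p.1 p.2

lemma linearMap_vec {M : Type*} [AddCommGroup M] [Module k M] {g : ℕ → ℕ → M}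
    (hg : ∀ b a, ¬(b < N ∧ a < N) → g b a = 0) (b a : ℕ) :
    linearMap g (vec k N b a) = g b a := by
  by_cases h : b < N ∧ a < N
  · rw [vec, dif_pos h, linearMap, Finsupp.linearCombination_single, one_smul]
  · rw [vec_eq_zero h, map_zero, hg b a h]

lemma linearMap_ext {M : Type*} [AddCommGroup M] [Module k M] {f g : Induced k N →ₗ[k] M}
    (h : ∀ b a, b < N → a < N → f (vec k N b a) = g (vec k N b a)) : f = g := by
  refine Finsupp.lhom_ext' fun p ↦ LinearMap.ext_ring ?_
  simpa [vec] using h p.1 p.2 p.1.2 p.2.2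

/-- The operator acting on `E ^ b F ^ a v` by `r ^ b * r⁻¹ ^ a * c`. -/
def gradeOp (r c : k) : Module.End k (Induced k N) :=
  linearMap fun b a ↦ (r ^ b * r⁻¹ ^ a * c) • vec k N b a

lemma gradeOp_vec (r c : k) (b a : ℕ) :
    gradeOp r c (vec k N b a) = (r ^ b * r⁻¹ ^ a * c) • vec k N b a :=
  linearMap_vec (fun b a h ↦ by rw [vec_eq_zero h, smul_zero]) b a

lemma gradeOp_mul (r c r' c' : k) :
    (gradeOp r c * gradeOp r' c' : Module.End k (Induced k N)) = gradeOp (r * r') (c * c') := by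
  refine linearMap_ext fun b a _ _ ↦ ?_
  rw [Module.End.mul_apply, gradeOp_vec, map_smul, gradeOp_vec, gradeOp_vec, smul_smul]
  congr 1
  rw [mul_inv, mul_pow, mul_pow]
  ring

lemma gradeOp_one : (gradeOp 1 1 : Module.End k (Induced k N)) = 1 :=
  linearMap_ext fun b a _ _ ↦ by simp [gradeOp_vec]

lemma gradeOp_pow (r c : k) (s : ℕ) :
    (gradeOp r c ^ s : Module.End k (Induced k N)) = gradeOp (r ^ s) (c ^ s) := by
  induction s with
  | zero => simp [gradeOp_one]
  | succ s ih => rw [pow_succ, ih, gradeOp_mul, ← pow_succ, ← pow_succ]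

variable (k N) in
/-- The action of `E`. -/
def raise : Module.End k (Induced k N) := linearMap fun b a ↦ vec k N (b + 1) a

lemma raise_vec (b a : ℕ) : raise k N (vec k N b a) = vec k N (b + 1) a :=
  linearMap_vec (fun b a h ↦ vec_eq_zero (by omega)) b a

lemma raise_pow_vec (s b a : ℕ) : (raise k N ^ s) (vec k N b a) = vec k N (b + s) a := by
  induction s with
  | zero => rfl
  | succ s ih => rw [pow_succ', Module.End.mul_apply, ih, raise_vec, add_assoc]

lemma raise_pow : raise k N ^ N = 0 := by
  refine linearMap_ext fun b a _ _ ↦ ?_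
  rw [raise_pow_vec, vec_eq_zero (by omega), LinearMap.zero_apply]

lemma qCommute_gradeOp_raise (r c : k) : QCommute r (gradeOp r c) (raise k N) := by
  refine linearMap_ext fun b a _ _ ↦ ?_
  rw [Module.End.mul_apply, LinearMap.smul_apply, Module.End.mul_apply, raise_vec, gradeOp_vec,
    gradeOp_vec, map_smul, raise_vec, smul_smul]
  congr 1
  ring

variable (N) in
/-- The action of `F`, where `μ` is the eigenvalue of `L` on `v`. -/
def lower (q μ : k) : Module.End k (Induced k N) :=
  linearMap fun
    | 0, a => vec k N 0 (a + 1)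
    | b + 1, a => q⁻¹ ^ (b + 1) • vec k N (b + 1) (a + 1)
        + lowerCoeff q ((q ^ 2) ^ a * μ) b • vec k N b a

variable {q μ : k}

lemma lower_vec_zero (a : ℕ) : lower N q μ (vec k N 0 a) = vec k N 0 (a + 1) := by
  by_cases h : 0 < N ∧ a < N
  · simp [lower, linearMap, vec, h]
  · rw [vec_eq_zero h, map_zero, vec_eq_zero (by omega)]

lemma lower_pow_vec_zero (s a : ℕ) : (lower N q μ ^ s) (vec k N 0 a) = vec k N 0 (a + s) := by
  induction s with
  | zero => rfl
  | succ s ih => rw [pow_succ', Module.End.mul_apply, ih, lower_vec_zero, add_assoc]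

lemma lower_vec_succ (hq : IsPrimitiveRoot q N) (hN : 1 < N) (b a : ℕ) :
    lower N q μ (vec k N (b + 1) a) = q⁻¹ ^ (b + 1) • vec k N (b + 1) (a + 1)
      + lowerCoeff q ((q ^ 2) ^ a * μ) b • vec k N b a := by
  by_cases h : b + 1 < N ∧ a < N
  · rw [vec, dif_pos h, lower, linearMap, Finsupp.linearCombination_single, one_smul]
  have hsecond : lowerCoeff q ((q ^ 2) ^ a * μ) b • vec k N b a = 0 := by
    by_cases hb : b + 1 = N
    · rw [lowerCoeff, hb, gauss_eq_zero hq hN, zero_mul, zero_mul, zero_smul]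
    · rw [vec_eq_zero (by omega), smul_zero]
  rw [vec_eq_zero h, map_zero, vec_eq_zero (by omega), hsecond, smul_zero, add_zero]

lemma qCommute_gradeOp_lower (hq : IsPrimitiveRoot q N) (hN : 1 < N) {r : k} (hr : r ≠ 0) (c : k) :
    QCommute r⁻¹ (gradeOp r c) (lower N q μ) := by
  refine linearMap_ext fun b a _ _ ↦ ?_
  rw [Module.End.mul_apply, LinearMap.smul_apply, Module.End.mul_apply, gradeOp_vec, map_smul]
  cases b with
  | zero =>
    rw [lower_vec_zero, gradeOp_vec, smul_smul]
    congr 1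
    ring
  | succ b =>
    rw [lower_vec_succ hq hN, map_add, map_smul, map_smul, gradeOp_vec, gradeOp_vec, pow_succ r b,
      show r ^ b * r⁻¹ ^ a * c = r⁻¹ * (r ^ b * r * r⁻¹ ^ a * c) by field_simp]
    module

lemma qTriple (hq : IsPrimitiveRoot q N) (hN : 1 < N) :
    QTriple q (gradeOp (q ^ 2)⁻¹ μ) (raise k N) (lower N q μ) := by
  have hq₀ : q ≠ 0 := hq.ne_zero (by omega)
  refine ⟨hq₀, ?_, qCommute_gradeOp_raise _ _, ?_⟩
  · refine linearMap_ext fun b a _ _ ↦ ?_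
    rw [LinearMap.add_apply, LinearMap.smul_apply, LinearMap.sub_apply, Module.End.mul_apply,
      Module.End.mul_apply, Module.End.one_apply, gradeOp_vec, raise_vec, lower_vec_succ hq hN,
      inv_inv, mul_assoc]
    cases b with
    | zero =>
      rw [lower_vec_zero, raise_vec, lowerCoeff_zero]
      module
    | succ b =>
      rw [lower_vec_succ hq hN, map_add, map_smul, map_smul, raise_vec, raise_vec,
        lowerCoeff_succ hq₀, pow_mul, inv_pow]
      module
  · simpa only [inv_inv] using qCommute_gradeOp_lower hq hN
      (inv_ne_zero (pow_ne_zero 2 hq₀)) μ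

lemma lower_pow (hq : IsPrimitiveRoot q N) (hN : 1 < N) : lower N q μ ^ N = 0 := by
  have hcomm : lower N q μ ^ N * raise k N = raise k N * lower N q μ ^ N := by
    have h := (qTriple (μ := μ) hq hN).pow_succ_mul (N - 1)
    rwa [Nat.sub_add_cancel hN.le, gauss_eq_zero hq hN, gauss_eq_zero hq.inv hN, inv_pow,
      hq.pow_eq_one, inv_one, one_smul, zero_smul, zero_smul, sub_self, mul_zero, add_zero] at h
  refine linearMap_ext fun b a _ _ ↦ ?_
  have hvec : vec k N b a = (raise k N ^ b) (vec k N 0 a) := by rw [raise_pow_vec, zero_add]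
  rw [hvec, ← Module.End.mul_apply, (Commute.pow_right hcomm b).eq, Module.End.mul_apply,
    lower_pow_vec_zero, vec_eq_zero (by omega), map_zero, LinearMap.zero_apply]

/-- Modulo the vectors with `b < N - 1`, the operator `F` sends `E ^ (N - 1) F ^ a v` to a nonzero
multiple of `E ^ (N - 1) F ^ (a + 1) v`. -/
lemma lower_pow_vec_last_ne_zero (hq : IsPrimitiveRoot q N) (hN : 1 < N) :
    (lower N q μ ^ (N - 1)) (vec k N (N - 1) 0) ≠ 0 := by
  let coord (a : ℕ) : Induced k N →ₗ[k] k :=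
    linearMap fun b a' ↦ if b = N - 1 ∧ a' = a then 1 else 0
  have coord_vec {a : ℕ} (ha : a < N) (b a' : ℕ) :
      coord a (vec k N b a') = if b = N - 1 ∧ a' = a then 1 else 0 :=
    linearMap_vec (fun b a' h ↦ if_neg (by omega)) b a'
  have hstep {a : ℕ} (ha : a + 1 < N) :
      coord (a + 1) ∘ₗ lower N q μ = q⁻¹ ^ (N - 1) • coord a := by
    refine linearMap_ext fun b a' hb _ ↦ ?_
    rw [LinearMap.comp_apply, LinearMap.smul_apply, coord_vec (by omega)]
    cases b with
    | zero => rw [lower_vec_zero, coord_vec ha, if_neg (by omega), if_neg (by omega), smul_zero]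
    | succ b =>
      rw [lower_vec_succ hq hN, map_add, map_smul, map_smul, coord_vec ha, coord_vec ha,
        if_neg (show ¬(b = N - 1 ∧ a' = a + 1) by omega), smul_zero, add_zero]
      simp only [add_left_inj]
      split_ifs with h
      · rw [h.1]
      · rw [smul_zero, smul_zero]
  have hcoord (a : ℕ) (ha : a < N) :
      coord a ((lower N q μ ^ a) (vec k N (N - 1) 0)) = (q⁻¹ ^ (N - 1)) ^ a := by
    induction a with
    | zero => simp [coord_vec ha]
    | succ a ih =>
      rw [pow_succ', Module.End.mul_apply, pow_succ', ← ih (by omega)]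
      exact LinearMap.congr_fun (hstep ha) _
  intro h
  have := hcoord (N - 1) (by omega)
  rw [h, map_zero, eq_comm] at this
  exact pow_ne_zero _ (pow_ne_zero _ (inv_ne_zero (hq.ne_zero (by omega)))) this

end Induced

end Induced

section InducedModule

variable {k : Type} [Field k] {n : ℕ} {q : k}

namespace Admissible

lemma exists_algHom (H : Admissible n q) {A : Type*} [Ring A] [Algebra k A] {x y e f : A}
    (hx : x ^ n = 1) (hy : y ^ n = (x ^ (n - 1)) ^ 2) (hxy : Commute x y)
    (hxe : QCommute (q ^ n) x e) (hxf : QCommute (q ^ n)⁻¹ x f)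
    (hye : QCommute (q ^ n * (q ^ 2)⁻¹) y e) (hyf : QCommute ((q ^ n)⁻¹ * q ^ 2) y f)
    (he : e ^ n ^ 2 = 0) (hf : f ^ n ^ 2 = 0)
    (hfe : f * e = q⁻¹ • (e * f) + (1 - x ^ (n - 1) * y)) :
    ∃ φ : U k n q →ₐ[k] A,
      φ (K k n q) = x ∧ φ (Kh k n q) = y ∧ φ (E k n q) = e ∧ φ (F k n q) = f := by
  have hx' : x * x ^ (n - 1) = 1 := by rw [← pow_succ', Nat.sub_add_cancel H.pos, hx]
  have hy' : y * y ^ (n ^ 2 - 1) = 1 := by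
    rw [← pow_succ', Nat.sub_add_cancel (pow_pos H.pos 2), pow_sq_eq_one_of_pow_eq hx hy]
  have hconj {c : k} {z z' w : A} (h : QCommute c z w) (hz : z * z' = 1) :
      z * w * z' = c • w := by
    rw [h, smul_mul_assoc, mul_assoc, hz, mul_one]
  have hrel ⦃a b : FreeAlgebra k (Fin 4)⦄ (h : Rel k n q a b) :
      FreeAlgebra.lift k ![x, y, e, f] a = FreeAlgebra.lift k ![x, y, e, f] b := by
    cases h <;> simp only [map_mul, map_pow, map_sub, map_smul, map_one, map_zero,
      FreeAlgebra.lift_ι_apply] <;> dsimp only [Matrix.cons_val]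
    case Kord => exact hx
    case Khord => exact hy
    case KKh => exact hxy
    case KE => exact hconj hxe hx'
    case KF => exact hconj hxf hx'
    case KhE => exact hconj hye hy'
    case KhF => exact hconj hyf hy'
    case Enil => exact he
    case Fnil => exact hf
    case EF => rw [hfe, add_sub_cancel_left]
  refine ⟨RingQuot.liftAlgHom k ⟨FreeAlgebra.lift k ![x, y, e, f], hrel⟩, ?_, ?_, ?_, ?_⟩ <;>
    simp [K, Kh, E, F]

open Induced in
lemma exists_algHom_induced (H : Admissible n q) {κ χ : k} (hκ : κ ^ n = 1)
    (hχ : χ ^ n = (κ ^ (n - 1)) ^ 2) :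
    ∃ φ : U k n q →ₐ[k] Module.End k (Induced k (n ^ 2)),
      φ (K k n q) = gradeOp (q ^ n) κ ∧ φ (Kh k n q) = gradeOp (q ^ n * (q ^ 2)⁻¹) χ ∧
      φ (E k n q) = raise k (n ^ 2) ∧ φ (F k n q) = lower (n ^ 2) q (κ ^ (n - 1) * χ) := by
  have hq := H.isPrimitiveRoot
  have hq₀ := H.q_ne_zero
  have hN := H.one_lt_sq
  have hpred : (q ^ n) ^ (n - 1) = (q ^ n)⁻¹ := eq_inv_of_mul_eq_one_left H.q_pow_pow_pred
  have hr : q ^ n * (q ^ 2)⁻¹ ≠ 0 := by positivity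
  have hrn : (q ^ n * (q ^ 2)⁻¹) ^ n = ((q ^ n) ^ (n - 1)) ^ 2 := by
    rw [hpred, mul_pow, ← pow_mul, ← pow_two, hq.pow_eq_one, one_mul, inv_pow, inv_pow, ← pow_mul,
      ← pow_mul, mul_comm]
  refine H.exists_algHom ?_ ?_ ?_ (qCommute_gradeOp_raise _ _)
    (qCommute_gradeOp_lower hq hN (pow_ne_zero n hq₀) _) (qCommute_gradeOp_raise _ _) ?_
    raise_pow (lower_pow hq hN) ?_
  · rw [gradeOp_pow, hκ, ← pow_mul, ← pow_two, hq.pow_eq_one, gradeOp_one]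
  · rw [gradeOp_pow, gradeOp_pow, gradeOp_pow, hχ, hrn]
  · rw [commute_iff_eq, gradeOp_mul, gradeOp_mul, mul_comm (q ^ n), mul_comm κ]
  · simpa only [mul_inv, inv_inv] using qCommute_gradeOp_lower hq hN hr _
  · rw [(Induced.qTriple hq hN).f_mul_e, gradeOp_pow, gradeOp_mul, ← mul_assoc,
      H.q_pow_pow_pred, one_mul]

lemma exists_torus_character (H : Admissible n q) (s j : ℕ) : ∃ κ χ : k, κ ^ n = 1 ∧
    χ ^ n = (κ ^ (n - 1)) ^ 2 ∧ κ ^ (n - 1) * χ = (q ^ 2) ^ s ∧ κ * χ ^ (n / 2) = (-1) ^ j := by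
  obtain ⟨m, -, hn⟩ := H.exists_eq_four_mul
  have hq₀ := H.q_ne_zero
  set κ : k := (-1) ^ (j + s) * q⁻¹ ^ (n * s) with hκ_def
  have hneg : (-1 : k) ^ n = 1 := by rw [hn, pow_mul]; norm_num
  have hqn : q ^ (n * n) = 1 := by rw [← pow_two, H.isPrimitiveRoot.pow_eq_one]
  have hqm : q ^ (2 * (n * m)) = -1 := by
    rw [← H.pow_half, show n ^ 2 / 2 = 2 * (n * m) from
      Nat.div_eq_of_eq_mul_left two_pos (by rw [hn]; ring)]
  have hκ : κ ^ n = 1 := by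
    rw [hκ_def, mul_pow, pow_right_comm, hneg, one_pow, one_mul, inv_pow, inv_pow, ← pow_mul,
      mul_right_comm, pow_mul, hqn, one_pow, inv_one]
  have hκ_pred : κ ^ (n - 1) = κ⁻¹ :=
    eq_inv_of_mul_eq_one_left (by rw [← pow_succ, Nat.sub_add_cancel H.pos, hκ])
  have hκ₀ : κ ≠ 0 := ne_zero_pow H.pos.ne' (by rw [hκ]; exact one_ne_zero)
  have hκ_mul : κ * (q ^ n) ^ s = (-1) ^ (j + s) := by
    rw [hκ_def, inv_pow, ← pow_mul, inv_mul_cancel_right₀ (pow_ne_zero _ hq₀)]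
  have hκ_sq : κ ^ 2 = ((q ^ 2) ^ (n * s))⁻¹ := by
    rw [hκ_def, mul_pow, pow_right_comm, neg_one_sq, one_pow, one_mul, pow_right_comm, inv_pow,
      inv_pow]
  refine ⟨κ, κ * (q ^ 2) ^ s, hκ, ?_, ?_, ?_⟩
  · rw [hκ_pred, inv_pow, hκ_sq, inv_inv, mul_pow, hκ, one_mul, ← pow_mul, mul_comm s]
  · rw [hκ_pred, inv_mul_cancel_left₀ hκ₀]
  · rw [show n / 2 = 2 * m by omega, mul_pow, pow_mul κ, hκ_sq, inv_pow,
      show ((q ^ 2) ^ (n * s)) ^ m = (q ^ (2 * (n * m))) ^ s by ring,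
      show ((q ^ 2) ^ s) ^ (2 * m) = (q ^ n) ^ s by rw [hn]; ring, hqm, ← inv_pow, inv_neg_one,
      mul_left_comm, hκ_mul, pow_add, mul_left_comm, ← mul_pow, neg_one_mul, neg_neg, one_pow,
      mul_one]

/-- The weight vector is the generator of a module induced from the torus. -/
lemma exists_weight_vector_pow_ne_zero (H : Admissible n q) (s j : ℕ) :
    ∃ (V : Type) (_ : AddCommGroup V) (_ : Module k V) (_ : Module (U k n q) V)
      (_ : IsScalarTower k (U k n q) V), ∃ v ∈ weightSpace k n q V s j,
      E k n q ^ (n ^ 2 - 1) • F k n q ^ (n ^ 2 - 1) • v ≠ 0 ∧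
      F k n q ^ (n ^ 2 - 1) • E k n q ^ (n ^ 2 - 1) • v ≠ 0 := by
  obtain ⟨κ, χ, hκ, hχ, hL, hT⟩ := H.exists_torus_character s j
  obtain ⟨φ, hφK, hφKh, hφE, hφF⟩ := H.exists_algHom_induced hκ hχ
  let _ : Module (U k n q) (Induced k (n ^ 2)) := Module.compHom _ φ.toRingHom
  have hsmul (x : U k n q) (v : Induced k (n ^ 2)) : x • v = φ x v := rfl
  have htower : IsScalarTower k (U k n q) (Induced k (n ^ 2)) :=
    ⟨fun c x v ↦ by rw [hsmul, hsmul, map_smul, LinearMap.smul_apply]⟩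
  have hN := H.one_lt_sq
  refine ⟨Induced k (n ^ 2), _, _, _, htower, Induced.vec k (n ^ 2) 0 0, ⟨?_, ?_⟩, ?_, ?_⟩
  · simp only [hsmul, L, Kinv, map_mul, map_pow, hφK, hφKh, Induced.gradeOp_pow,
      Induced.gradeOp_mul, Induced.gradeOp_vec, pow_zero, one_mul, hL]
  · simp only [hsmul, T, map_mul, map_pow, hφK, hφKh, Induced.gradeOp_pow,
      Induced.gradeOp_mul, Induced.gradeOp_vec, pow_zero, one_mul, hT]
  · rw [hsmul, hsmul, map_pow, map_pow, hφE, hφF, Induced.lower_pow_vec_zero,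
      Induced.raise_pow_vec]
    exact Induced.vec_ne_zero (by omega) (by omega)
  · rw [hsmul, hsmul, map_pow, map_pow, hφE, hφF, Induced.raise_pow_vec, zero_add]
    exact Induced.lower_pow_vec_last_ne_zero H.isPrimitiveRoot hN

end Admissible

end InducedModule

section Gamma

variable {k : Type} [Field k] {n : ℕ} {q : k}

local notation "𝖪" => K k n q
local notation "𝖧" => Kh k n q
local notation "𝖤" => E k n q
local notation "𝖥" => F k n q
local notation "𝖫" => L k n q
local notation "𝖳" => T k n q

/-! ### The span of the restricted PBW monomials -/

lemma exists_eq_sum_of_mem_pbw {y : U k n q} (hN : 1 < n ^ 2) (hy : y ∈ pbw k n q) :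
    ∃ h : ℕ → ℕ → U k n q, (∀ a b, h a b ∈ torus k n q) ∧
      y = ∑ a ∈ Finset.range (n ^ 2 - 1), 𝖥 ^ a * ∑ b ∈ Finset.range (n ^ 2), h a b * 𝖤 ^ b := by
  induction hy using Submodule.span_induction with
  | mem x hx =>
    obtain ⟨a, b, c, d, ha, hb, -, -, rfl⟩ := hx
    refine ⟨Pi.single a (Pi.single b (𝖪 ^ c * 𝖧 ^ d)), fun a' b' ↦ ?_, ?_⟩
    · obtain rfl | ha' := eq_or_ne a' a
      · obtain rfl | hb' := eq_or_ne b' b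
        · simpa using mul_mem (pow_mem K_mem_torus c) (pow_mem Kh_mem_torus d)
        · simp [hb']
      · simp [ha']
    · have ha' : a ∈ Finset.range (n ^ 2 - 1) := Finset.mem_range.2 (by omega)
      have hb' : b ∈ Finset.range (n ^ 2) := Finset.mem_range.2 (by omega)
      rw [Finset.sum_eq_single_of_mem a ha' fun a' _ hne ↦ by simp [hne],
        Finset.sum_eq_single_of_mem b hb' fun b' _ hne ↦ by simp [hne]]
      simp [mul_assoc]
  | zero => exact ⟨0, fun _ _ ↦ zero_mem _, by simp⟩
  | add x y _ _ hx hy =>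
    obtain ⟨h, hh, rfl⟩ := hx
    obtain ⟨h', hh', rfl⟩ := hy
    refine ⟨h + h', fun a b ↦ add_mem (hh a b) (hh' a b), ?_⟩
    simp only [Pi.add_apply, add_mul, Finset.sum_add_distrib, mul_add]
  | smul c x _ hx =>
    obtain ⟨h, hh, rfl⟩ := hx
    refine ⟨c • h, fun a b ↦ Subalgebra.smul_mem _ (hh a b) c, ?_⟩
    simp only [Pi.smul_apply, smul_mul_assoc, ← Finset.smul_sum, mul_smul_comm]

namespace Admissible

lemma eq_zero_of_F_pow_mul_mul_E_pow_eq_zero (H : Admissible n q) {h : U k n q}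
    (hh : h ∈ torus k n q) (hzero : 𝖥 ^ (n ^ 2 - 1) * h * 𝖤 ^ (n ^ 2 - 1) = 0) : h = 0 := by
  have hmul (i j : ℕ) (hj : j ≤ 1) : h * eIdem k n q i j = 0 := by
    obtain ⟨c, hc⟩ := H.exists_torus_smul_eq hh i j
    obtain ⟨V, _, _, _, _, v, hv, -, hne⟩ :=
      H.exists_weight_vector_pow_ne_zero (i + (n ^ 2 - 1)) (j + (n ^ 2 - 1))
    have hEv : 𝖤 ^ (n ^ 2 - 1) • v ∈ weightSpace k n q V i j := by
      have hmem := E_pow_smul_mem_weightSpace H _ hv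
      rwa [weightSpace_congr H rfl (j' := j)] at hmem
      rw [add_assoc, ← two_mul]
      exact Nat.add_mul_mod_self_left _ _ _
    have hcv : c • 𝖥 ^ (n ^ 2 - 1) • 𝖤 ^ (n ^ 2 - 1) • v = 0 := by
      rw [smul_comm, ← hc V _ hEv, smul_smul, smul_smul, hzero, zero_smul]
    rw [← smul_eq_mul, hc _ _ (H.eIdem_mem_weightSpace hj),
      (smul_eq_zero.1 hcv).resolve_right hne, zero_smul]
  rw [← mul_one h, ← H.sum_eIdem, Finset.mul_sum]
  refine Finset.sum_eq_zero fun i _ ↦ ?_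
  rw [Finset.mul_sum]
  exact Finset.sum_eq_zero fun j hj ↦ hmul i j (Nat.lt_succ_iff.1 (Finset.mem_range.1 hj))

lemma eq_zero_of_mem_pbw_of_F_mul_eq_zero (H : Admissible n q) {y : U k n q}
    (hy : y ∈ pbw k n q) (hFy : 𝖥 * y = 0) : y = 0 := by
  obtain ⟨h, hh, rfl⟩ := exists_eq_sum_of_mem_pbw H.one_lt_sq hy
  set z : ℕ → U k n q := fun a ↦ ∑ b ∈ Finset.range (n ^ 2), h a b * 𝖤 ^ b with hz
  have hz_zero (a : ℕ) (hFz : 𝖥 ^ (n ^ 2 - 1) * z a = 0) : z a = 0 := by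
    have hFh (b : ℕ) (hb : b < n ^ 2) : 𝖥 ^ (n ^ 2 - 1) * h a b = 0 := by
      refine eq_zero_of_sum_mul_pow_eq_zero (z := fun b ↦ 𝖥 ^ (n ^ 2 - 1) * h a b) E_pow ?_
        (fun b _ hb ↦ ?_) hb
      · simpa only [hz, Finset.mul_sum, mul_assoc] using hFz
      · rw [H.eq_zero_of_F_pow_mul_mul_E_pow_eq_zero (hh a b) hb, mul_zero]
    refine Finset.sum_eq_zero fun b hb ↦ ?_
    rw [H.eq_zero_of_F_pow_mul_mul_E_pow_eq_zero (hh a b)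
      (by rw [hFh b (Finset.mem_range.1 hb), zero_mul]), zero_mul]
  let w : ℕ → U k n q := fun | 0 => 0 | a + 1 => z a
  have hw : ∑ a ∈ Finset.range (n ^ 2), 𝖥 ^ a • w a = 0 := by
    rw [← Nat.sub_add_cancel H.one_lt_sq.le, Finset.sum_range_succ', smul_zero, add_zero, ← hFy,
      Finset.mul_sum]
    exact Finset.sum_congr rfl fun a _ ↦ by rw [smul_eq_mul, pow_succ', mul_assoc]
  refine Finset.sum_eq_zero fun a ha ↦ ?_
  have hza : z a = 0 := by
    refine eq_zero_of_sum_pow_smul_eq_zero F_pow hw (fun a _ hFw ↦ ?_)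
      (a := a + 1) (Nat.add_lt_of_lt_sub (Finset.mem_range.1 ha))
    obtain - | a := a
    · rfl
    · exact hz_zero a hFw
  change 𝖥 ^ a * z a = 0
  rw [hza, mul_zero]

lemma E_mul_mem_pbw (H : Admissible n q) {y : U k n q} (hy : y ∈ pbw k n q) :
    𝖤 * y ∈ pbw k n q := by
  suffices pbw k n q ≤ (pbw k n q).comap (LinearMap.mulLeft k 𝖤) from this hy
  refine Submodule.span_le.2 ?_
  rintro _ ⟨a, b, c, d, ha, -, -, -, rfl⟩
  change 𝖤 * (𝖥 ^ a * 𝖪 ^ c * 𝖧 ^ d * 𝖤 ^ b) ∈ pbw k n q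
  have hh : 𝖪 ^ c * 𝖧 ^ d ∈ torus k n q := mul_mem (pow_mem K_mem_torus c) (pow_mem Kh_mem_torus d)
  rw [mul_assoc (𝖥 ^ a)]
  generalize 𝖪 ^ c * 𝖧 ^ d = h at hh ⊢
  obtain ⟨h', hh', hcross⟩ := H.exists_E_mul_torus_eq hh
  obtain - | a := a
  · rw [pow_zero, one_mul, ← mul_assoc, hcross, mul_assoc, ← pow_succ', ← one_mul h',
      ← pow_zero 𝖥]
    exact H.F_pow_mul_torus_mul_E_pow_mem_pbw hh' ha _
  · set z : U k n q := gauss k q⁻¹ (a + 1) • 1 - gauss k q (a + 1) • 𝖫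
    have hz : z ∈ torus k n q := sub_mem (Subalgebra.smul_mem _ (one_mem _) _)
      (Subalgebra.smul_mem _ L_mem_torus _)
    have hexp : 𝖤 * 𝖥 ^ (a + 1) = q ^ (a + 1) • (𝖥 ^ (a + 1) * 𝖤 - 𝖥 ^ a * z) := by
      rw [H.qTriple.pow_succ_mul, add_sub_cancel_right, smul_smul, ← mul_pow,
        mul_inv_cancel₀ H.q_ne_zero, one_pow, one_smul]
    rw [← mul_assoc, ← mul_assoc, hexp, smul_mul_assoc, smul_mul_assoc, sub_mul, sub_mul,
      mul_assoc _ 𝖤, hcross, ← mul_assoc, mul_assoc _ 𝖤, ← pow_succ', mul_assoc _ z]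
    exact Submodule.smul_mem _ _ (sub_mem (H.F_pow_mul_torus_mul_E_pow_mem_pbw hh' ha _)
      (H.F_pow_mul_torus_mul_E_pow_mem_pbw (mul_mem hz hh) (by omega) _))

end Admissible

/-! ### The generators `α` and `γ` -/

/-- The range of the labels `(i, j)` of the modules `P_{2i,j}`. -/
structure IsLabel (n i j : ℕ) : Prop where
  one_le : 1 ≤ i
  le_half : i ≤ n ^ 2 / 2
  le_one : j ≤ 1

variable {i j : ℕ}

lemma IsLabel.two_mul_le (hij : IsLabel n i j) : 2 * i ≤ n ^ 2 := by
  have := hij.le_half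
  omega

/-- The coefficient of `E ^ r F ^ (n² - 2i + r) e_{2i,j}` in `γ_{2i,j}`, where `(q²) ^ (n² - i + t)`
is the eigenvalue of `L` on `F ^ (n² - 2i + t) e_{2i,j}`. -/
def gamCoeff (n : ℕ) (q : k) (i r : ℕ) : k :=
  q ^ (2 * i - 2) *
    ∏ t ∈ Finset.Ico r (2 * i - 2), -(q ^ t * lowerCoeff q ((q ^ 2) ^ (n ^ 2 - i + t + 1)) t)

lemma gamCoeff_succ_mul (hq : q ≠ 0) {r : ℕ} (hr : r < 2 * i - 2) :
    q⁻¹ ^ r * gamCoeff n q i r +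
      gamCoeff n q i (r + 1) * lowerCoeff q ((q ^ 2) ^ (n ^ 2 - i + r + 1)) r = 0 := by
  have hpow : q⁻¹ ^ r * q ^ r = 1 := by rw [← mul_pow, inv_mul_cancel₀ hq, one_pow]
  rw [gamCoeff, gamCoeff, Finset.prod_eq_prod_Ico_succ_bot hr]
  linear_combination (-q ^ (2 * i - 2) *
    lowerCoeff q ((q ^ 2) ^ (n ^ 2 - i + r + 1)) r * ∏ t ∈ Finset.Ico (r + 1) (2 * i - 2),
      -(q ^ t * lowerCoeff q ((q ^ 2) ^ (n ^ 2 - i + t + 1)) t)) * hpow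

lemma gamCoeff_last : gamCoeff n q i (2 * i - 2) = q ^ (2 * i - 2) := by
  rw [gamCoeff, Finset.Ico_self, Finset.prod_empty, mul_one]

lemma gamCoeff_zero_ne_zero (H : Admissible n q) (hij : IsLabel n i j) :
    gamCoeff n q i 0 ≠ 0 := by
  have hi := hij.two_mul_le
  refine mul_ne_zero (pow_ne_zero _ H.q_ne_zero) (Finset.prod_ne_zero_iff.2 fun t ht ↦
    neg_ne_zero.2 (mul_ne_zero (pow_ne_zero _ H.q_ne_zero) ?_))
  have ht' := (Finset.mem_Ico.1 ht).2
  refine lowerCoeff_ne_zero H.isPrimitiveRoot (by omega) fun hpow ↦ ?_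
  have h : q ^ (2 * (n ^ 2 - i + t + 1)) = q ^ t := by rw [pow_mul, hpow]
  have hmod := (H.isPrimitiveRoot.isOfFinOrder (by omega)).pow_eq_pow_iff_modEq.1 h
  rw [← H.isPrimitiveRoot.eq_orderOf] at hmod
  refine Nat.not_dvd_of_lt_of_lt_mul_succ (k := 1) ?_ ?_
    ((Nat.modEq_iff_dvd' (by omega)).1 hmod.symm) <;> omega

variable (k n q i j) in
/-- The explicit form of `γ_{2i,j}`. -/
def gamSum : U k n q :=
  ∑ r ∈ Finset.range (2 * i - 2 + 1),
    gamCoeff n q i r • 𝖤 ^ r • 𝖥 ^ (n ^ 2 - 2 * i + r) • eIdem k n q i j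

namespace Admissible

lemma F_mul_gamSum (H : Admissible n q) (hij : IsLabel n i j) :
    𝖥 * gamSum k n q i j = beta k n q i j := by
  have hi := hij.two_mul_le
  have hi' := hij.one_le
  have he (r : ℕ) :=
    (F_pow_smul_mem_weightSpace H (H.eIdem_mem_weightSpace (i := i) hij.le_one) r).1
  rw [← smul_eq_mul, gamSum, H.qTriple.f_smul_sum_e_pow_smul_f_pow_smul he fun r hr ↦ ?_,
    gamCoeff_last, ← mul_pow, inv_mul_cancel₀ H.q_ne_zero, one_pow, one_smul,
    show n ^ 2 - 2 * i + (2 * i - 2) + 1 = n ^ 2 - 1 by omega]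
  · rfl
  · rw [show i + (n ^ 2 - 2 * i + r + 1) = n ^ 2 - i + r + 1 by omega]
    exact gamCoeff_succ_mul H.q_ne_zero hr

lemma gamSum_mem_pbw (H : Admissible n q) (hij : IsLabel n i j) :
    gamSum k n q i j ∈ pbw k n q := by
  have hi := hij.two_mul_le
  have hi' := hij.one_le
  have hE (r : ℕ) {y : U k n q} (hy : y ∈ pbw k n q) : 𝖤 ^ r * y ∈ pbw k n q := by
    induction r with
    | zero => simpa using hy
    | succ r ih => simpa only [pow_succ', mul_assoc] using H.E_mul_mem_pbw ih
  refine sum_mem fun r hr ↦ Submodule.smul_mem _ _ (hE r ?_)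
  have hr' := Finset.mem_range.1 hr
  simpa using H.F_pow_mul_torus_mul_E_pow_mem_pbw (a := n ^ 2 - 2 * i + r)
    (H.eIdem_mem_torus hij.le_one) (by omega) 0

lemma gam_eq_gamSum (H : Admissible n q) (hij : IsLabel n i j) :
    gam k n q i j = gamSum k n q i j := by
  have hsum := And.intro (H.gamSum_mem_pbw hij) (H.F_mul_gamSum hij)
  have hunique : ∃! x, x ∈ pbw k n q ∧ 𝖥 * x = beta k n q i j := by
    refine ⟨_, hsum, fun y hy ↦ sub_eq_zero.1 ?_⟩
    refine H.eq_zero_of_mem_pbw_of_F_mul_eq_zero (sub_mem hy.1 hsum.1) ?_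
    rw [mul_sub, hy.2, hsum.2, sub_self]
  rw [gam, dif_pos hunique]
  exact hunique.unique hunique.choose_spec.1 hsum

lemma F_smul_gam (H : Admissible n q) (hij : IsLabel n i j) :
    𝖥 • gam k n q i j = 𝖤 ^ (2 * i - 2) • alpha k n q i j := by
  rw [H.gam_eq_gamSum hij]
  exact H.F_mul_gamSum hij

lemma gam_mem_weightSpace (H : Admissible n q) (hij : IsLabel n i j) :
    gam k n q i j ∈ weightSpace k n q (U k n q) (n ^ 2 - i) j := by
  have hi := hij.two_mul_le
  rw [H.gam_eq_gamSum hij]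
  refine sum_mem fun r _ ↦ Submodule.smul_mem _ _ ?_
  have he := F_pow_smul_mem_weightSpace H (H.eIdem_mem_weightSpace (i := i) hij.le_one)
    (n ^ 2 - 2 * i + r)
  rw [show i + (n ^ 2 - 2 * i + r) = n ^ 2 - i + r by omega] at he
  have hEe := E_pow_smul_mem_weightSpace H r he
  rwa [weightSpace_congr H rfl (j' := j)] at hEe
  have := H.half_mul_two
  simp only [Nat.ModEq]
  omega

lemma gam_smul (H : Admissible n q) (hij : IsLabel n i j) {V : Type*} [AddCommGroup V] [Module k V]
    [Module (U k n q) V] [IsScalarTower k (U k n q) V] {w : V} (hw : w ∈ weightSpace k n q V i j)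
    (hFw : 𝖥 ^ (n ^ 2 - 2 * i + 1) • w = 0) :
    gam k n q i j • w = gamCoeff n q i 0 • 𝖥 ^ (n ^ 2 - 2 * i) • w := by
  rw [H.gam_eq_gamSum hij, gamSum, Finset.sum_range_succ', add_smul, Finset.sum_smul,
    Finset.sum_eq_zero, zero_add]
  · simp [mul_smul, H.eIdem_smul_of_mem_weightSpace hij.le_one hw]
  · intro r _
    simp only [smul_eq_mul, smul_assoc, mul_smul, H.eIdem_smul_of_mem_weightSpace hij.le_one hw]
    rw [← add_assoc, add_right_comm, add_comm _ r, pow_add 𝖥, mul_smul, hFw, smul_zero, smul_zero,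
      smul_zero]

lemma alpha_mem_weightSpace (H : Admissible n q) (hij : IsLabel n i j) :
    alpha k n q i j ∈ weightSpace k n q (U k n q) (i - 1) (j + 1) := by
  have he := F_pow_smul_mem_weightSpace H (H.eIdem_mem_weightSpace (i := i) hij.le_one)
    (n ^ 2 - 1)
  have hN := H.one_lt_sq
  have hhalf := H.half_mul_two
  rwa [weightSpace_congr H (s' := i - 1) (j' := j + 1)] at he
  · have hi : i + (n ^ 2 - 1) = i - 1 + n ^ 2 / 2 * 2 := by have := hij.one_le; omega
    rw [hi]
    exact Nat.add_mul_mod_self_left _ _ _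
  · simp only [Nat.ModEq]
    omega

lemma F_smul_alpha (H : Admissible n q) : 𝖥 • alpha k n q i j = 0 := by
  rw [alpha, smul_eq_mul, ← mul_assoc, ← pow_succ', Nat.sub_add_cancel H.one_lt_sq.le, F_pow,
    zero_mul]

end Admissible

end Gamma

section LowestWeight

variable {k : Type} [Field k] {n : ℕ} {q : k} {V : Type*} [AddCommGroup V] [Module k V]
  [Module (U k n q) V] [IsScalarTower k (U k n q) V] {v w : V} {s j s' j' : ℕ}

local notation "𝖤" => E k n q
local notation "𝖥" => F k n q
local notation "𝖫" => L k n q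
local notation "𝖳" => T k n q

/-! ### Modules generated by lowest weight vectors -/

variable (k n q) in
/-- The action of the polynomials in `E` on a vector. -/
def polyEval (v : V) : k[X] →ₗ[k] V :=
  ((LinearMap.toSpanSingleton (U k n q) V v).restrictScalars k) ∘ₗ (aeval 𝖤).toLinearMap

lemma polyEval_apply (f : k[X]) : polyEval k n q v f = aeval 𝖤 f • v := rfl

lemma smul_mem_range_polyEval {c a : k} {x : U k n q} (hx : QCommute c x 𝖤) (hv : x • v = a • v)
    {y : V} (hy : y ∈ LinearMap.range (polyEval k n q v)) :
    x • y ∈ LinearMap.range (polyEval k n q v) := by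
  obtain ⟨f, rfl⟩ := hy
  refine ⟨a • f.comp (C c * X), ?_⟩
  rw [polyEval_apply, polyEval_apply, smul_smul x, hx.mul_aeval, mul_smul, hv, map_smul, smul_assoc,
    smul_comm]

lemma E_smul_mem_range_polyEval {y : V} (hy : y ∈ LinearMap.range (polyEval k n q v)) :
    𝖤 • y ∈ LinearMap.range (polyEval k n q v) := by
  obtain ⟨f, rfl⟩ := hy
  exact ⟨X * f, by rw [polyEval_apply, polyEval_apply, map_mul, aeval_X, mul_smul]⟩

lemma exists_smul_eq_aeval_smul_add_aeval_smul (H : Admissible n q)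
    (hv : v ∈ weightSpace k n q V s j) (hw : w ∈ weightSpace k n q V s' j') (hFv : 𝖥 • v = 0)
    {p : k[X]} (hFw : 𝖥 • w = aeval 𝖤 p • v) (x : U k n q) :
    ∃ f h : k[X], x • w = aeval 𝖤 f • v + aeval 𝖤 h • w := by
  let W := LinearMap.range (polyEval k n q v) ⊔ LinearMap.range (polyEval k n q w)
  have hW {x : U k n q} (h : ∀ f, x • polyEval k n q v f ∈ W ∧ x • polyEval k n q w f ∈ W) (y : V)
      (hy : y ∈ W) : x • y ∈ W := by
    obtain ⟨_, ⟨f, rfl⟩, _, ⟨g, rfl⟩, rfl⟩ := Submodule.mem_sup.1 hy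
    rw [smul_add]
    exact W.add_mem (h f).1 (h g).2
  have hleft (f : k[X]) : aeval 𝖤 f • v ∈ W := Submodule.mem_sup_left ⟨f, rfl⟩
  have hright (f : k[X]) : aeval 𝖤 f • w ∈ W := Submodule.mem_sup_right ⟨f, rfl⟩
  have hxw : x • w ∈ W := by
    refine H.smul_mem_of_generators_smul_mem W (hW fun f ↦ ?_) (hW fun f ↦ ?_) (hW fun f ↦ ?_)
      (hW fun f ↦ ?_) x (by simpa using hright 1)
    · exact ⟨Submodule.mem_sup_left (smul_mem_range_polyEval H.qCommute_L_E hv.1 ⟨f, rfl⟩),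
        Submodule.mem_sup_right (smul_mem_range_polyEval H.qCommute_L_E hw.1 ⟨f, rfl⟩)⟩
    · exact ⟨Submodule.mem_sup_left (smul_mem_range_polyEval H.qCommute_T_E hv.2 ⟨f, rfl⟩),
        Submodule.mem_sup_right (smul_mem_range_polyEval H.qCommute_T_E hw.2 ⟨f, rfl⟩)⟩
    · exact ⟨Submodule.mem_sup_left (E_smul_mem_range_polyEval ⟨f, rfl⟩),
        Submodule.mem_sup_right (E_smul_mem_range_polyEval ⟨f, rfl⟩)⟩
    · obtain ⟨g, -, hg⟩ := H.qTriple.exists_f_smul_aeval_smul hv.1 f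
      obtain ⟨g', -, hg'⟩ := H.qTriple.exists_f_smul_aeval_smul hw.1 f
      rw [polyEval_apply, polyEval_apply, hg, hg', hFv, hFw, smul_zero, zero_add, smul_smul,
        ← map_mul]
      exact ⟨hleft _, W.add_mem (hleft _) (hright _)⟩
  obtain ⟨_, ⟨f, rfl⟩, _, ⟨h, rfl⟩, hfh⟩ := Submodule.mem_sup.1 hxw
  exact ⟨f, h, hfh.symm⟩

lemma exists_smul_eq_aeval_smul (H : Admissible n q) (hv : v ∈ weightSpace k n q V s j)
    (hFv : 𝖥 • v = 0) (x : U k n q) : ∃ f : k[X], x • v = aeval 𝖤 f • v := by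
  obtain ⟨f, h, hfh⟩ := exists_smul_eq_aeval_smul_add_aeval_smul (s := 0) (j := 0) (p := 0) H
    (zero_mem _) hv (smul_zero _) (by rw [hFv, smul_zero]) x
  exact ⟨h, by rw [hfh, smul_zero, zero_add]⟩

lemma lowest_weight_modEq_of_isSimpleModule (H : Admissible n q) [IsSimpleModule (U k n q) V]
    (hv : v ∈ weightSpace k n q V s j) (hw : w ∈ weightSpace k n q V s' j') (hv₀ : v ≠ 0)
    (hw₀ : w ≠ 0) (hFv : 𝖥 • v = 0) (hFw : 𝖥 • w = 0) :
    s ≡ s' [MOD n ^ 2 / 2] ∧ j ≡ j' [MOD 2] := by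
  obtain ⟨x, hx⟩ := IsSimpleModule.toSpanSingleton_surjective (U k n q) hv₀ w
  obtain ⟨y, hy⟩ := IsSimpleModule.toSpanSingleton_surjective (U k n q) hw₀ v
  obtain ⟨f, hf⟩ := exists_smul_eq_aeval_smul H hv hFv x
  obtain ⟨g, hg⟩ := exists_smul_eq_aeval_smul H hw hFw y
  have hwv : w = aeval 𝖤 f • v := hx.symm.trans hf
  have hvw : v = aeval 𝖤 g • w := hy.symm.trans hg
  have hE : IsNilpotent 𝖤 := ⟨n ^ 2, E_pow⟩
  exact ⟨H.sq_pow_eq_sq_pow_iff.1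
      (eigenvalue_eq_of_mem_aeval hE H.qCommute_L_E hv₀ hv.1 hw.1 hwv hvw),
    H.neg_one_pow_eq_neg_one_pow_iff.1
      (eigenvalue_eq_of_mem_aeval hE H.qCommute_T_E hv₀ hv.2 hw.2 hwv hvw)⟩

lemma map_mem_weightSpace {W : Type*} [AddCommGroup W] [Module k W] [Module (U k n q) W]
    [IsScalarTower k (U k n q) W] (φ : V →ₗ[U k n q] W) (hv : v ∈ weightSpace k n q V s j) :
    φ v ∈ weightSpace k n q W s j :=
  ⟨by rw [← map_smul, hv.1, φ.map_smul_of_tower], by rw [← map_smul, hv.2, φ.map_smul_of_tower]⟩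

end LowestWeight

section StructureOfP

variable {k : Type} [Field k] {n : ℕ} {q : k} {i j : ℕ}

local notation "𝖤" => E k n q
local notation "𝖥" => F k n q
local notation "𝖫" => L k n q
local notation "α" => alpha k n q i j
local notation "γ" => gam k n q i j

namespace Admissible

/-! ### The structure of `P_{2i,j}` -/

lemma lowerCoeff_alpha_ne_zero (H : Admissible n q) (hij : IsLabel n i j) {t : ℕ}
    (ht : t < 2 * i - 2) : lowerCoeff q (q ^ (2 * i - 2)) t ≠ 0 := by
  have hi := hij.two_mul_le
  refine lowerCoeff_ne_zero H.isPrimitiveRoot (by omega) fun h ↦ ?_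
  have := H.isPrimitiveRoot.pow_inj (by omega) (by omega) h
  omega

lemma L_smul_alpha (H : Admissible n q) (hij : IsLabel n i j) : 𝖫 • α = q ^ (2 * i - 2) • α := by
  rw [(H.alpha_mem_weightSpace hij).1, ← pow_mul, Nat.mul_sub_one]

lemma gam_mem_P : γ ∈ P k n q i j := Submodule.mem_span_singleton_self _

lemma alpha_mem_P (H : Admissible n q) (hij : IsLabel n i j) : α ∈ P k n q i j := by
  refine H.qTriple.mem_of_e_pow_smul_mem (H.L_smul_alpha hij) H.F_smul_alpha
    (fun t ht ↦ H.lowerCoeff_alpha_ne_zero hij ht) ?_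
  rw [← H.F_smul_gam hij]
  exact (P k n q i j).smul_mem _ gam_mem_P

lemma mem_P_iff (H : Admissible n q) (hij : IsLabel n i j) {x : U k n q} :
    x ∈ P k n q i j ↔ ∃ f h : k[X], x = aeval 𝖤 f • α + aeval 𝖤 h • γ := by
  refine ⟨fun hx ↦ ?_, ?_⟩
  · obtain ⟨y, rfl⟩ := Submodule.mem_span_singleton.1 hx
    refine exists_smul_eq_aeval_smul_add_aeval_smul (p := X ^ (2 * i - 2)) H
      (H.alpha_mem_weightSpace hij) (H.gam_mem_weightSpace hij) H.F_smul_alpha ?_ y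
    rw [H.F_smul_gam hij, map_pow, aeval_X]
  · rintro ⟨f, h, rfl⟩
    exact add_mem (Submodule.smul_mem _ _ (H.alpha_mem_P hij)) (Submodule.smul_mem _ _ gam_mem_P)

lemma alpha_smul (H : Admissible n q) (hj : j ≤ 1) {V : Type*} [AddCommGroup V] [Module k V]
    [Module (U k n q) V] [IsScalarTower k (U k n q) V] {v : V} (hv : v ∈ weightSpace k n q V i j) :
    α • v = 𝖥 ^ (n ^ 2 - 1) • v := by
  rw [alpha, mul_smul, H.eIdem_smul_of_mem_weightSpace hj hv]

lemma X_pow_dvd_of_aeval_smul_alpha_eq_zero (H : Admissible n q) (hj : j ≤ 1) {f : k[X]}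
    (h : aeval 𝖤 f • α = 0) : X ^ n ^ 2 ∣ f := by
  obtain ⟨V, _, _, _, _, v, hv, hne, -⟩ := H.exists_weight_vector_pow_ne_zero i j
  refine X_pow_dvd_of_aeval_smul_eq_zero E_pow hne ?_
  rw [← H.alpha_smul hj hv, smul_smul, ← smul_eq_mul, h, zero_smul]

/-- A vector `F ^ (2i - 1) v` of the weight of `e_{2i,j}` is killed by `α` but not by `γ`. -/
lemma X_pow_dvd_of_aeval_smul_alpha_add_aeval_smul_gam_eq_zero (H : Admissible n q)
    (hij : IsLabel n i j) {f h : k[X]} (hfh : aeval 𝖤 f • α + aeval 𝖤 h • γ = 0) :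
    X ^ n ^ 2 ∣ f ∧ X ^ n ^ 2 ∣ h := by
  have hi := hij.two_mul_le
  have hi' := hij.one_le
  obtain ⟨V, _, _, _, _, v, hv, hne, -⟩ :=
    H.exists_weight_vector_pow_ne_zero (n ^ 2 + 1 - i) (j + 1)
  have hw : 𝖥 ^ (2 * i - 1) • v ∈ weightSpace k n q V i j := by
    have hFv := F_pow_smul_mem_weightSpace H hv (2 * i - 1)
    rwa [weightSpace_congr H (s' := i) (j' := j)] at hFv
    · rw [show n ^ 2 + 1 - i + (2 * i - 1) = i + n ^ 2 / 2 * 2 by rw [H.half_mul_two]; omega]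
      exact Nat.add_mul_mod_self_left _ _ _
    · simp only [Nat.ModEq]
      omega
  have hFF (a : ℕ) : 𝖥 ^ a • 𝖥 ^ (2 * i - 1) • v = 𝖥 ^ (a + (2 * i - 1)) • v := by
    rw [smul_smul, ← pow_add]
  have hzero {a : ℕ} (ha : n ^ 2 ≤ a) : 𝖥 ^ a • v = 0 := by
    rw [pow_eq_zero_of_le ha F_pow, zero_smul]
  have hαw : α • 𝖥 ^ (2 * i - 1) • v = 0 := by
    rw [H.alpha_smul hij.le_one hw, hFF, hzero (by omega)]
  have hγw : γ • 𝖥 ^ (2 * i - 1) • v = gamCoeff n q i 0 • 𝖥 ^ (n ^ 2 - 1) • v := by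
    rw [H.gam_smul hij hw (by rw [hFF, hzero (by omega)]), hFF,
      show n ^ 2 - 2 * i + (2 * i - 1) = n ^ 2 - 1 by omega]
  have hh : X ^ n ^ 2 ∣ h := by
    have hact := congrArg (· • 𝖥 ^ (2 * i - 1) • v) hfh
    simp only [add_smul, smul_assoc, hαw, hγw, smul_zero, zero_add, zero_smul] at hact
    refine X_pow_dvd_of_aeval_smul_eq_zero E_pow ?_ hact
    rw [smul_comm]
    exact smul_ne_zero (gamCoeff_zero_ne_zero H hij) hne
  refine ⟨H.X_pow_dvd_of_aeval_smul_alpha_eq_zero hij.le_one (i := i) (j := j) ?_, hh⟩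
  rwa [aeval_eq_zero_of_X_pow_dvd E_pow hh, zero_smul, add_zero] at hfh

lemma exists_mem_degreeLT_aeval_E_eq (f : k[X]) :
    ∃ r ∈ degreeLT k (n ^ 2), aeval 𝖤 r = aeval 𝖤 f := by
  refine ⟨f %ₘ X ^ n ^ 2, ?_, ?_⟩
  · rw [mem_degreeLT, ← degree_X_pow (R := k) (n ^ 2)]
    exact degree_modByMonic_lt f (monic_X_pow _)
  · conv_rhs => rw [← modByMonic_add_div f (X ^ n ^ 2)]
    rw [map_add, aeval_eq_zero_of_X_pow_dvd E_pow (dvd_mul_right _ _), add_zero]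

lemma nonempty_degreeLT_prod_linearEquiv_P (H : Admissible n q) (hij : IsLabel n i j) :
    Nonempty ((degreeLT k (n ^ 2) × degreeLT k (n ^ 2)) ≃ₗ[k] P k n q i j) := by
  let Φ : degreeLT k (n ^ 2) × degreeLT k (n ^ 2) →ₗ[k] U k n q :=
    ((polyEval k n q α) ∘ₗ (degreeLT k (n ^ 2)).subtype).coprod
      ((polyEval k n q γ) ∘ₗ (degreeLT k (n ^ 2)).subtype)
  have hinj : Function.Injective Φ := by
    refine (injective_iff_map_eq_zero Φ).2 fun ⟨⟨f, hf⟩, ⟨h, hh⟩⟩ hfh ↦ ?_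
    have hzero {p : k[X]} (hp : p ∈ degreeLT k (n ^ 2)) (hdvd : X ^ n ^ 2 ∣ p) : p = 0 :=
      eq_zero_of_dvd_of_degree_lt hdvd (by rw [degree_X_pow]; exact mem_degreeLT.1 hp)
    obtain ⟨hXf, hXh⟩ := H.X_pow_dvd_of_aeval_smul_alpha_add_aeval_smul_gam_eq_zero hij hfh
    exact Prod.ext (Subtype.ext (hzero hf hXf)) (Subtype.ext (hzero hh hXh))
  have hrange : LinearMap.range Φ = (P k n q i j).restrictScalars k := by
    ext x
    refine ⟨?_, fun hx ↦ ?_⟩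
    · rintro ⟨⟨f, h⟩, rfl⟩
      exact (H.mem_P_iff hij).2 ⟨f, h, rfl⟩
    · obtain ⟨f, h, rfl⟩ := (H.mem_P_iff hij).1 hx
      obtain ⟨f', hf', hff'⟩ := exists_mem_degreeLT_aeval_E_eq (n := n) (q := q) f
      obtain ⟨h', hh', hhh'⟩ := exists_mem_degreeLT_aeval_E_eq (n := n) (q := q) h
      exact ⟨(⟨f', hf'⟩, ⟨h', hh'⟩), congrArg₂ (· • α + · • γ) hff' hhh'⟩
  exact ⟨(LinearEquiv.ofInjective Φ hinj).trans (LinearEquiv.ofEq _ _ hrange)⟩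

lemma finrank_P (H : Admissible n q) (hij : IsLabel n i j) :
    Module.finrank k (P k n q i j) = 2 * n ^ 2 := by
  obtain ⟨φ⟩ := H.nonempty_degreeLT_prod_linearEquiv_P hij
  rw [← φ.finrank_eq, ((degreeLTEquiv k (n ^ 2)).prodCongr (degreeLTEquiv k (n ^ 2))).finrank_eq,
    Module.finrank_prod, Module.finrank_fin_fun, two_mul]

lemma isNoetherian_P (H : Admissible n q) (hij : IsLabel n i j) :
    IsNoetherian (U k n q) (P k n q i j) := by
  obtain ⟨φ⟩ := H.nonempty_degreeLT_prod_linearEquiv_P hij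
  have := Module.Finite.equiv (degreeLTEquiv k (n ^ 2)).symm
  exact isNoetherian_of_tower k (isNoetherian_of_linearEquiv φ)

lemma gam_mem_of_aeval_smul_add_aeval_smul_mem (H : Admissible n q) (hij : IsLabel n i j)
    {f h : k[X]} (hh : h.coeff 0 ≠ 0) {W : Submodule (U k n q) (U k n q)}
    (hW : aeval 𝖤 f • α + aeval 𝖤 h • γ ∈ W) : γ ∈ W :=
  H.qTriple.mem_of_aeval_smul_add_aeval_smul_mem ⟨n ^ 2, E_pow⟩
    (fun _ ht ↦ H.lowerCoeff_alpha_ne_zero hij ht) (H.L_smul_alpha hij) H.F_smul_alpha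
    (H.F_smul_gam hij) hh hW

lemma coeff_zero_eq_one_of_aeval_smul_add_aeval_smul_eq_gam (H : Admissible n q)
    (hij : IsLabel n i j) {f h : k[X]} (hfh : aeval 𝖤 f • α + aeval 𝖤 h • γ = γ) :
    h.coeff 0 = 1 := by
  have hrel : aeval 𝖤 f • α + aeval 𝖤 (h + C (-1)) • γ = 0 := by
    rw [map_add, aeval_C, add_smul, algebraMap_smul, ← add_assoc, hfh, neg_smul, one_smul]
    exact add_neg_cancel _
  have hcoeff := X_pow_dvd_iff.1
    (H.X_pow_dvd_of_aeval_smul_alpha_add_aeval_smul_gam_eq_zero hij hrel).2 0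
    (zero_le_one.trans_lt H.one_lt_sq)
  rwa [coeff_add, coeff_C_zero, add_neg_eq_zero] at hcoeff

lemma gam_ne_zero (H : Admissible n q) (hij : IsLabel n i j) : γ ≠ 0 := fun h ↦ by
  simpa using H.coeff_zero_eq_one_of_aeval_smul_add_aeval_smul_eq_gam hij (f := 0) (h := 0)
    (by simp [h])

lemma supIrred_P (H : Admissible n q) (hij : IsLabel n i j) : SupIrred (P k n q i j) := by
  refine ⟨fun hmin ↦ H.gam_ne_zero hij ?_, fun N₁ N₂ hN ↦ ?_⟩
  · have hγ : γ ∈ P k n q i j := gam_mem_P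
    rwa [isMin_iff_eq_bot.1 hmin, Submodule.mem_bot] at hγ
  have hgen {N : Submodule (U k n q) (U k n q)} (hNP : N ≤ P k n q i j) {f h : k[X]}
      (hh : h.coeff 0 ≠ 0) (hmem : aeval 𝖤 f • α + aeval 𝖤 h • γ ∈ N) : N = P k n q i j :=
    hNP.antisymm ((Submodule.span_singleton_le_iff_mem _ _).2
      (H.gam_mem_of_aeval_smul_add_aeval_smul_mem hij hh hmem))
  have hN₁ : N₁ ≤ P k n q i j := hN ▸ le_sup_left
  have hN₂ : N₂ ≤ P k n q i j := hN ▸ le_sup_right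
  obtain ⟨x, hx, y, hy, hxy⟩ := Submodule.mem_sup.1 (hN.symm ▸ gam_mem_P : γ ∈ N₁ ⊔ N₂)
  obtain ⟨f₁, h₁, rfl⟩ := (H.mem_P_iff hij).1 (hN₁ hx)
  obtain ⟨f₂, h₂, rfl⟩ := (H.mem_P_iff hij).1 (hN₂ hy)
  by_contra! hne
  have h₁_coeff : h₁.coeff 0 = 0 := by_contra fun h ↦ hne.1 (hgen hN₁ h hx)
  have h₂_coeff : h₂.coeff 0 = 0 := by_contra fun h ↦ hne.2 (hgen hN₂ h hy)
  have hsum : aeval 𝖤 (f₁ + f₂) • α + aeval 𝖤 (h₁ + h₂) • γ = γ := by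
    rw [map_add, map_add, add_smul, add_smul, add_add_add_comm, hxy]
  simpa [h₁_coeff, h₂_coeff] using
    H.coeff_zero_eq_one_of_aeval_smul_add_aeval_smul_eq_gam hij hsum

/-! ### The simple quotients of `P_{2i,j}` -/

/-- The generator `γ` regarded as an element of `P_{2i,j}`. -/
def genP (k : Type) [Field k] (n : ℕ) (q : k) (i j : ℕ) : P k n q i j := ⟨gam k n q i j, gam_mem_P⟩

lemma exists_smul_genP_eq (x : P k n q i j) : ∃ y : U k n q, y • genP k n q i j = x := by
  obtain ⟨y, hy⟩ := Submodule.mem_span_singleton.1 x.2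
  exact ⟨y, Subtype.ext hy⟩

lemma genP_mem_weightSpace (H : Admissible n q) (hij : IsLabel n i j) :
    genP k n q i j ∈ weightSpace k n q (P k n q i j) (n ^ 2 - i) j :=
  ⟨Subtype.ext (H.gam_mem_weightSpace hij).1, Subtype.ext (H.gam_mem_weightSpace hij).2⟩

section Quotient

variable {S : Type*} [AddCommGroup S] [Module (U k n q) S]

lemma map_genP_ne_zero {π : P k n q i j →ₗ[U k n q] S} (hπ : π ≠ 0) :
    π (genP k n q i j) ≠ 0 := by
  contrapose! hπ
  ext x
  obtain ⟨y, rfl⟩ := exists_smul_genP_eq x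
  rw [map_smul, hπ, smul_zero, LinearMap.zero_apply]

lemma map_alpha_eq_zero (H : Admissible n q) (hij : IsLabel n i j) [IsSimpleModule (U k n q) S]
    {π : P k n q i j →ₗ[U k n q] S} (hπ : π ≠ 0) : π ⟨α, H.alpha_mem_P hij⟩ = 0 := by
  by_contra hα
  obtain ⟨x, hx⟩ := IsSimpleModule.toSpanSingleton_surjective (U k n q) hα (-π (genP k n q i j))
  rw [LinearMap.toSpanSingleton_apply] at hx
  obtain ⟨f, hf⟩ := exists_smul_eq_aeval_smul H (H.alpha_mem_weightSpace hij) H.F_smul_alpha x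
  have hker : aeval 𝖤 f • α + aeval 𝖤 (1 : k[X]) • γ ∈
      (LinearMap.ker π).map (P k n q i j).subtype := by
    refine ⟨x • ⟨α, H.alpha_mem_P hij⟩ + genP k n q i j, ?_, ?_⟩
    · rw [SetLike.mem_coe, LinearMap.mem_ker, map_add, map_smul, hx, neg_add_cancel]
    · rw [← hf, map_one, one_smul]
      rfl
  obtain ⟨y, hy, hyγ⟩ := H.gam_mem_of_aeval_smul_add_aeval_smul_mem hij (by simp) hker
  obtain rfl : y = genP k n q i j := Subtype.ext hyγ
  exact map_genP_ne_zero hπ hy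

lemma F_smul_map_genP (H : Admissible n q) (hij : IsLabel n i j) [IsSimpleModule (U k n q) S]
    {π : P k n q i j →ₗ[U k n q] S} (hπ : π ≠ 0) : 𝖥 • π (genP k n q i j) = 0 := by
  have hF : 𝖥 • genP k n q i j = 𝖤 ^ (2 * i - 2) • ⟨α, H.alpha_mem_P hij⟩ :=
    Subtype.ext (H.F_smul_gam hij)
  rw [← map_smul, hF, map_smul, H.map_alpha_eq_zero hij hπ, smul_zero]

end Quotient

lemma exists_gam_smul_E_pow_smul_eq (H : Admissible n q) (hij : IsLabel n i j) {V : Type*}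
    [AddCommGroup V] [Module k V] [Module (U k n q) V] [IsScalarTower k (U k n q) V] {v : V}
    (hv : v ∈ weightSpace k n q V (n ^ 2 - i) j) (hFv : 𝖥 • v = 0) :
    ∃ c : k, c ≠ 0 ∧ γ • 𝖤 ^ (n ^ 2 - 2 * i) • v = c • v := by
  have hi := hij.two_mul_le
  have hi' := hij.one_le
  have hw : 𝖤 ^ (n ^ 2 - 2 * i) • v ∈ weightSpace k n q V i j := by
    rw [show n ^ 2 - i = i + (n ^ 2 - 2 * i) by omega] at hv
    have hEv := E_pow_smul_mem_weightSpace H _ hv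
    rwa [weightSpace_congr H rfl (j' := j)] at hEv
    have := H.half_mul_two
    simp only [Nat.ModEq]
    omega
  have hFE := H.qTriple.f_pow_smul_e_pow_smul hv.1 hFv (n ^ 2 - 2 * i)
  refine ⟨gamCoeff n q i 0 *
    ∏ t ∈ Finset.range (n ^ 2 - 2 * i), lowerCoeff q ((q ^ 2) ^ (n ^ 2 - i)) t,
    mul_ne_zero (gamCoeff_zero_ne_zero H hij) (Finset.prod_ne_zero_iff.2 fun t ht ↦ ?_), ?_⟩
  · have ht' := Finset.mem_range.1 ht
    refine lowerCoeff_ne_zero H.isPrimitiveRoot (by omega) fun h ↦ ?_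
    rw [← pow_mul, (H.isPrimitiveRoot.isOfFinOrder (by omega)).pow_eq_pow_iff_modEq,
      ← H.isPrimitiveRoot.eq_orderOf] at h
    refine Nat.not_dvd_of_lt_of_lt_mul_succ (k := 1) ?_ ?_
      ((Nat.modEq_iff_dvd' (by omega)).1 h.symm) <;> omega
  · rw [H.gam_smul hij hw, hFE, smul_smul]
    rw [pow_succ', mul_smul, hFE, smul_comm, hFv, smul_zero]

lemma exists_surjective_of_lowest_weight_vector (H : Admissible n q) (hij : IsLabel n i j)
    {S : Type*} [AddCommGroup S] [Module k S] [Module (U k n q) S] [IsScalarTower k (U k n q) S]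
    [IsSimpleModule (U k n q) S] {v : S} (hv : v ∈ weightSpace k n q S (n ^ 2 - i) j) (hv₀ : v ≠ 0)
    (hFv : 𝖥 • v = 0) : ∃ θ : P k n q i j →ₗ[U k n q] S, Function.Surjective θ := by
  obtain ⟨c, hc, hγv⟩ := H.exists_gam_smul_E_pow_smul_eq hij hv hFv
  let θ : P k n q i j →ₗ[U k n q] S :=
    LinearMap.toSpanSingleton _ _ (𝖤 ^ (n ^ 2 - 2 * i) • v) ∘ₗ (P k n q i j).subtype
  refine ⟨θ, fun s ↦ ?_⟩
  obtain ⟨x, hx⟩ := IsSimpleModule.toSpanSingleton_surjective (U k n q) (smul_ne_zero hc hv₀) s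
  exact ⟨x • genP k n q i j, (map_smul θ _ _).trans ((congrArg (x • ·) hγv).trans hx)⟩

lemma exists_isSimpleModule_P_linearMap_ne_zero (H : Admissible n q) (hij : IsLabel n i j) :
    ∃ (S : Type) (_ : AddCommGroup S) (_ : Module k S) (_ : Module (U k n q) S),
      IsScalarTower k (U k n q) S ∧ IsSimpleModule (U k n q) S ∧
        ∃ π : P k n q i j →ₗ[U k n q] S, π ≠ 0 := by
  have : Nontrivial (P k n q i j) := (Submodule.nontrivial_iff_ne_bot).2 (H.supIrred_P hij).ne_bot
  have : Module.Finite (U k n q) (P k n q i j) := Module.Finite.span_singleton _ _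
  exact exists_isSimpleModule_linearMap_ne_zero k (U k n q) (P k n q i j)

/-- Right multiplication by `E ^ (n² - 2i) γ` maps `U` to `P_{2i,j}`; its restriction to `P_{2i,j}`
multiplies the image of `γ` in the simple quotient by a nonzero scalar. -/
lemma projective_P (H : Admissible n q) (hij : IsLabel n i j) :
    Module.Projective (U k n q) (P k n q i j) := by
  obtain ⟨S, _, _, _, _, _, π, hπ⟩ := H.exists_isSimpleModule_P_linearMap_ne_zero hij
  have hv := map_mem_weightSpace π (H.genP_mem_weightSpace hij)
  obtain ⟨c, hc, hγ⟩ := H.exists_gam_smul_E_pow_smul_eq hij hv (H.F_smul_map_genP hij hπ)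
  let s : U k n q →ₗ[U k n q] P k n q i j :=
    LinearMap.toSpanSingleton _ _ (𝖤 ^ (n ^ 2 - 2 * i) • genP k n q i j)
  have hmap : (π ∘ₗ s ∘ₗ (P k n q i j).subtype) (genP k n q i j) = c • π (genP k n q i j) := by
    rw [← hγ, ← map_smul, ← map_smul]
    rfl
  have hne : π ∘ₗ s ∘ₗ (P k n q i j).subtype ≠ 0 := fun h ↦
    smul_ne_zero hc (map_genP_ne_zero hπ) (by rw [← hmap, h, LinearMap.zero_apply])
  have := IsSimpleModule.nontrivial (U k n q) S
  have := H.isNoetherian_P hij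
  exact projective_of_surjective_comp (P k n q i j).subtype s
    (surjective_of_surjective_comp_of_supIrred_top
      (supIrred_top_of_supIrred (H.supIrred_P hij)) _ π
      (LinearMap.surjective_of_ne_zero hne))

lemma isIndecomposable_P (H : Admissible n q) (hij : IsLabel n i j) :
    IsIndecomposable (U k n q) (P k n q i j) :=
  isIndecomposable_of_supIrred_top (supIrred_top_of_supIrred (H.supIrred_P hij))

/-! ### The classification -/

lemma eq_and_eq_of_linearEquiv (H : Admissible n q) (hij : IsLabel n i j) {i' j' : ℕ}
    (hij' : IsLabel n i' j') (φ : P k n q i j ≃ₗ[U k n q] P k n q i' j') : i = i' ∧ j = j' := by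
  obtain ⟨S, _, _, _, _, _, π, hπ⟩ := H.exists_isSimpleModule_P_linearMap_ne_zero hij'
  have hπφ : π ∘ₗ φ.toLinearMap ≠ 0 := fun h ↦
    hπ (LinearMap.ext fun x ↦ by simpa using LinearMap.congr_fun h (φ.symm x))
  obtain ⟨hii', hjj'⟩ := lowest_weight_modEq_of_isSimpleModule H
    (map_mem_weightSpace _ (H.genP_mem_weightSpace hij))
    (map_mem_weightSpace _ (H.genP_mem_weightSpace hij'))
    (map_genP_ne_zero hπφ) (map_genP_ne_zero hπ)
    (H.F_smul_map_genP hij hπφ) (H.F_smul_map_genP hij' hπ)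
  have hhalf := H.half_mul_two
  have hi := hij.two_mul_le
  have hi' := hij'.two_mul_le
  have h₁ := hij.one_le
  have h₁' := hij'.one_le
  rw [show n ^ 2 - i = n ^ 2 / 2 + (n ^ 2 / 2 - i) by omega,
    show n ^ 2 - i' = n ^ 2 / 2 + (n ^ 2 / 2 - i') by omega] at hii'
  have heq := (hii'.add_left_cancel' _).eq_of_lt_of_lt (by omega) (by omega)
  exact ⟨by omega,
    hjj'.eq_of_lt_of_lt (Nat.lt_succ_of_le hij.le_one) (Nat.lt_succ_of_le hij'.le_one)⟩

/-- The head of `M` contains a lowest weight vector, so it is the head of some `P_{2i,j}`, and both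
modules are projective covers of it. -/
lemma exists_linearEquiv_P (H : Admissible n q) {M : Type*} [AddCommGroup M]
    [Module (U k n q) M] [Module.Finite (U k n q) M]
    [Module.Projective (U k n q) M] (hM : IsIndecomposable (U k n q) M) :
    ∃ i j, IsLabel n i j ∧ Nonempty (M ≃ₗ[U k n q] P k n q i j) := by
  have := hM.1
  obtain ⟨S, _, _, _, _, _, π, hπ⟩ := exists_isSimpleModule_linearMap_ne_zero k (U k n q) M
  have := IsSimpleModule.nontrivial (U k n q) S
  obtain ⟨m, j, hm, hj, v, hv, hv₀, hFv⟩ := exists_lowest_weight_vector (V := S) H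
  have hhalf := H.half_mul_two
  have hij : IsLabel n (n ^ 2 / 2 - m) j := ⟨by omega, by omega, hj⟩
  rw [weightSpace_congr H (s' := n ^ 2 - (n ^ 2 / 2 - m)) (j' := j) _ rfl] at hv
  · obtain ⟨θ, hθ⟩ := H.exists_surjective_of_lowest_weight_vector hij hv hv₀ hFv
    have := H.projective_P hij
    exact ⟨_, _, hij, nonempty_linearEquiv_of_projective_cover
      (supIrred_top_of_supIrred (H.supIrred_P hij)) θ hθ hM π (LinearMap.surjective_of_ne_zero hπ)⟩
  · rw [show n ^ 2 - (n ^ 2 / 2 - m) = n ^ 2 / 2 + m by omega]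
    simp [Nat.ModEq]

end Admissible

end StructureOfP

end QFL

open QFL in
theorem statement9_general (k : Type) [Field k] (n : ℕ) (hn : 0 < n) (h4 : 4 ∣ n) (q : k)
    (hq : IsPrimitiveRoot q (n ^ 2)) :
    (∀ i j : ℕ, 1 ≤ i → i ≤ n ^ 2 / 2 → j ≤ 1 →
      Module.Projective (U k n q) (P k n q i j) ∧
      IsIndecomposable (U k n q) (P k n q i j) ∧
      Module.finrank k (P k n q i j) = 2 * n ^ 2) ∧
    (∀ i j i' j' : ℕ, 1 ≤ i → i ≤ n ^ 2 / 2 → j ≤ 1 → 1 ≤ i' → i' ≤ n ^ 2 / 2 → j' ≤ 1 →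
      Nonempty ((P k n q i j) ≃ₗ[U k n q] (P k n q i' j')) → i = i' ∧ j = j') ∧
    (∀ (M : Type*) [AddCommGroup M] [Module (U k n q) M] [Module.Finite (U k n q) M]
      [Module.Projective (U k n q) M], IsIndecomposable (U k n q) M →
      ∃ i j : ℕ, 1 ≤ i ∧ i ≤ n ^ 2 / 2 ∧ j ≤ 1 ∧
        Nonempty (M ≃ₗ[U k n q] (P k n q i j))) := by
  have H : Admissible n q := ⟨hn, h4, hq⟩
  refine ⟨fun i j hi hi' hj ↦ ?_, fun i j i' j' hi hi' hj h₁ h₂ h₃ ⟨φ⟩ ↦ ?_, fun M _ _ _ _ hM ↦ ?_⟩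
  · have hij : IsLabel n i j := ⟨hi, hi', hj⟩
    exact ⟨H.projective_P hij, H.isIndecomposable_P hij, H.finrank_P hij⟩
  · exact H.eq_and_eq_of_linearEquiv ⟨hi, hi', hj⟩ ⟨h₁, h₂, h₃⟩ φ
  · obtain ⟨i, j, hij, hφ⟩ := H.exists_linearEquiv_P hM
    exact ⟨i, j, hij.one_le, hij.le_half, hij.le_one, hφ⟩

open QFL in
/-- Corollary 2.13 (a), (c): the `P_{2i,j}` form a complete list of the non-isomorphic
indecomposable projective left `ũ_q(sl₂)`-modules, and each has `k`-dimension `2n²`. -/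
theorem statement9 (k : Type) [Field k] [IsAlgClosed k] [CharZero k]
    (n : ℕ) (hn : 0 < n) (h4 : 4 ∣ n) (q : k) (hq : IsPrimitiveRoot q (n ^ 2)) :
    (∀ i j : ℕ, 1 ≤ i → i ≤ n ^ 2 / 2 → j ≤ 1 →
      Module.Projective (U k n q) (P k n q i j) ∧
      IsIndecomposable (U k n q) (P k n q i j) ∧
      Module.finrank k (P k n q i j) = 2 * n ^ 2) ∧
    (∀ i j i' j' : ℕ, 1 ≤ i → i ≤ n ^ 2 / 2 → j ≤ 1 → 1 ≤ i' → i' ≤ n ^ 2 / 2 → j' ≤ 1 →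
      Nonempty ((P k n q i j) ≃ₗ[U k n q] (P k n q i' j')) → i = i' ∧ j = j') ∧
    (∀ (M : Type) (_ : AddCommGroup M) (_ : Module k M) (_ : Module (U k n q) M)
      (_ : IsScalarTower k (U k n q) M),
      FiniteDimensional k M → Module.Projective (U k n q) M →
      IsIndecomposable (U k n q) M →
      ∃ i j : ℕ, 1 ≤ i ∧ i ≤ n ^ 2 / 2 ∧ j ≤ 1 ∧
        Nonempty (M ≃ₗ[U k n q] (P k n q i j))) := by
  obtain ⟨hP, hinj, hM⟩ := statement9_general k n hn h4 q hq
  refine ⟨hP, hinj, fun M _ _ _ _ _ _ ↦ ?_⟩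
  have := Module.Finite.of_restrictScalars_finite k (U k n q) M
  exact hM M
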